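/- arXiv:math/0012024 — 4 statements merged into one kernel-verified Lean document; each statement's English description precedes it below -/
import Mathlib

section
/- Let (A, ⧢) be the shuffle algebra over ℚ on an alphabet X = {x₀, x₁, …}, and let C ⊂ A be the subalgebra spanned by words not beginning with x₁ and not ending with x₀. Then A is isomorphic as a commutative ℚ-algebra to the polynomial algebra C[x₀, x₁]; in particular, any ℚ-algebra morphism I : C → ℂ extends uniquely to an algebra morphism Ī : (A, ⧢) → ℂ with Ī(x₀) = Ī(x₁) = 0. -/
/-- The shuffle multiplicity: `shc u v w` is the coefficient of the word `w` in the
shuffle product `u ⧢ v`, defined by the usual recursion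
`1 ⧢ w = w ⧢ 1 = w`, `(xu) ⧢ (yv) = x(u ⧢ yv) + y(xu ⧢ v)`. -/
def shc {X : Type} [DecidableEq X] : List X → List X → List X → ℕ
  | u, v, [] => if u = [] ∧ v = [] then 1 else 0
  | u, v, c :: w =>
      (match u with
       | a :: u' => if a = c then shc u' v w else 0
       | [] => 0) +
      (match v with
       | b :: v' => if b = c then shc u v' w else 0
       | [] => 0)

/-- The shuffle product `u ⧢ v` of two words, as an element of the free ℚ-vector space
on words (all words appearing in `u ⧢ v` are permutations of `u ++ v`). -/
noncomputable def shPoly {X : Type} [DecidableEq X] (u v : List X) : List X →₀ ℚ :=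
  ∑ w ∈ (u ++ v).permutations.toFinset, (shc u v w : ℚ) • Finsupp.single w 1

/-- The shuffle product, extended bilinearly to the free ℚ-vector space on words. -/
noncomputable def mulSh {X : Type} [DecidableEq X] (f g : List X →₀ ℚ) : List X →₀ ℚ :=
  f.sum fun u cu => g.sum fun v cv => (cu * cv) • shPoly u v

/-- The span of the "convergent" words: those not beginning with the letter `a` and not
ending with the letter `b`. -/
noncomputable def goodSpan {X : Type} [DecidableEq X] (a b : X) :
    Submodule ℚ (List X →₀ ℚ) :=
  Submodule.span ℚ {p | ∃ w : List X,
    w.head? ≠ some a ∧ w.getLast? ≠ some b ∧ p = Finsupp.single w 1}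

/-!
Removing a letter `x₁` at the beginning of words and removing a letter `x₀` at the end of words are
commuting, locally nilpotent derivations `D₁`, `D₀` of the shuffle algebra `A`, and they satisfy
`Dᵢ xⱼ = δᵢⱼ`, like the partial derivatives of a polynomial ring. In characteristic zero such a
system of derivations makes `A` a polynomial ring over the joint kernel: a relation of minimal
degree between the letters is excluded by differentiating it, and an element `a` with
`Dⁿ⁺¹ a = 0` agrees with `xⁿ (Dⁿ a / n!)` up to an element killed by `Dⁿ`. The joint kernel of `D₀`
and `D₁` is the span `C` of the convergent words, whence `A ≅ C[x₀, x₁]`.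
-/

section MvPolynomial

open MvPolynomial

variable {σ R : Type*} [CommSemiring R] {p : MvPolynomial σ R}

theorem totalDegree_pderiv_lt {i : σ} (h : pderiv i p ≠ 0) :
    (pderiv i p).totalDegree < p.totalDegree := by
  have add_single_mem {m} (hm : m ∈ (pderiv i p).support) : m + Finsupp.single i 1 ∈ p.support := by
    rw [mem_support_iff, coeff_pderiv] at hm
    exact mem_support_iff.2 (left_ne_zero_of_mul hm)
  have degree_lt {m} (hm : m ∈ (pderiv i p).support) : (m.sum fun _ e ↦ e) < p.totalDegree := by
    have hle := le_totalDegree (add_single_mem hm)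
    rwa [Finsupp.sum_add_index' (fun _ ↦ rfl) (fun _ _ _ ↦ rfl),
      Finsupp.sum_single_index rfl, Nat.succ_le_iff] at hle
  obtain ⟨m, hm⟩ := support_nonempty.2 h
  exact (Finset.sup_lt_iff ((Nat.zero_le _).trans_lt (degree_lt hm))).2 fun _ ↦ degree_lt

theorem eq_C_of_pderiv_eq_zero [IsAddTorsionFree R] (h : ∀ i, pderiv i p = 0) :
    p = C (coeff 0 p) := by
  classical
  ext m
  rw [coeff_C]
  split_ifs with hm
  · rw [hm]
  obtain ⟨i, hi⟩ := Finsupp.ne_iff.1 (Ne.symm hm)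
  have hcoeff := coeff_pderiv (i := i) p (m - Finsupp.single i 1)
  rw [h, coeff_zero, Finsupp.sub_add_single_one_cancel hi, ← Nat.cast_succ,
    ← nsmul_eq_mul', eq_comm] at hcoeff
  exact (nsmul_eq_zero_iff_right (Nat.succ_ne_zero _)).1 hcoeff

theorem existsUnique_algHom_of_mvPolynomialEquiv {k S A B : Type*} [CommSemiring k]
    [CommSemiring S] [CommSemiring A] [CommSemiring B] [Algebra k S] [Algebra k A] [Algebra S A]
    [IsScalarTower k S A] [Algebra k B] (e : MvPolynomial σ S ≃ₐ[S] A) (φ : S →ₐ[k] B) (b : σ → B) :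
    ∃! ψ : A →ₐ[k] B, (∀ i, ψ (e (X i)) = b i) ∧ ∀ c, ψ (algebraMap S A c) = φ c := by
  let e' := e.restrictScalars k
  have he_C (c : S) : e (C c) = algebraMap S A c := e.commutes c
  refine ⟨(aevalTower φ b).comp e'.symm, ⟨fun i ↦ ?_, fun c ↦ ?_⟩, fun ψ ⟨hψ_X, hψ_C⟩ ↦ ?_⟩
  · simp [e']
  · simp [e', ← he_C]
  · have hcomp : ψ.comp e' = aevalTower φ b := by
      ext <;> simp [e', he_C, hψ_X, hψ_C]
    rw [← hcomp]
    ext; simp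

end MvPolynomial

section SliceSystem

open MvPolynomial

section CommSemiring

variable {ι k A : Type*} [CommSemiring k] [CommSemiring A] [Algebra k A]

/-- The joint kernel of a family of derivations, as a subalgebra. -/
def jointConstants (D : ι → Derivation k A A) : Subalgebra k A where
  carrier := {a | ∀ i, D i a = 0}
  mul_mem' ha hb i := by simp [ha i, hb i]
  add_mem' ha hb i := by simp [ha i, hb i]
  algebraMap_mem' r i := (D i).map_algebraMap r

theorem mem_jointConstants {D : ι → Derivation k A A} {a : A} :
    a ∈ jointConstants D ↔ ∀ i, D i a = 0 :=
  Iff.rfl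

theorem iterate_derivation_slice_pow_mul {D : Derivation k A A} {s c : A} (hs : D s = 1)
    (hc : D c = 0) (n : ℕ) : D^[n] (s ^ n * c) = (n.factorial : A) * c := by
  induction n with
  | zero => simp
  | succ n ih =>
    have hD : D (s ^ (n + 1) * c) = (n + 1) • (s ^ n * c) := by
      simp only [Derivation.leibniz, Derivation.leibniz_pow, hs, hc, smul_eq_mul, nsmul_eq_mul,
        Nat.add_sub_cancel]
      ring
    rw [Function.iterate_succ_apply, hD, iterate_map_nsmul, ih, nsmul_eq_mul, Nat.factorial_succ]
    push_cast
    ring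

/-- Commuting, locally nilpotent derivations `D i` together with elements `s i` on which they act
as the partial derivatives act on the variables of a polynomial ring. For a single derivation, such
an element is classically called a slice. -/
structure IsSliceSystem (D : ι → Derivation k A A) (s : ι → A) : Prop where
  commute : ∀ i j, Function.Commute (D i) (D j)
  exists_iterate_eq_zero : ∀ i a, ∃ n : ℕ, (D i)^[n] a = 0
  apply_self : ∀ i, D i (s i) = 1
  apply_of_ne : ∀ i j, i ≠ j → D i (s j) = 0

theorem IsSliceSystem.apply_aeval {D : ι → Derivation k A A} {s : ι → A} (h : IsSliceSystem D s)
    (i : ι) (p : MvPolynomial ι (jointConstants D)) :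
    D i (aeval s p) = aeval s (pderiv i p) := by
  classical
  induction p using MvPolynomial.induction_on with
  | C c =>
    rw [aeval_C, pderiv_C, map_zero]
    exact c.2 i
  | add p q hp hq => simp only [map_add, hp, hq]
  | mul_X p j hp =>
    have hj : D i (s j) = aeval s (pderiv i (X j : MvPolynomial ι (jointConstants D))) := by
      obtain rfl | hij := eq_or_ne i j
      · simp [h.apply_self]
      · simp [h.apply_of_ne i j hij, hij.symm]
    simp only [map_mul, map_add, Derivation.leibniz, smul_eq_mul, aeval_X, hp, hj]

end CommSemiring

namespace IsSliceSystem

variable {ι k A : Type*} [Field k] [CharZero k] [CommRing A] [Algebra k A]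
  {D : ι → Derivation k A A} {s : ι → A}

theorem algebraicIndependent (h : IsSliceSystem D s) :
    AlgebraicIndependent (jointConstants D) s := by
  rw [algebraicIndependent_iff]
  intro p hp
  induction hn : p.totalDegree using Nat.strong_induction_on generalizing p with
  | _ n ih =>
  have hderiv : ∀ i, pderiv i p = 0 := fun i ↦ by
    by_contra hne
    exact hne <| ih _ (hn ▸ totalDegree_pderiv_lt hne) _ (by rw [← h.apply_aeval, hp, map_zero]) rfl
  have : IsAddTorsionFree (jointConstants D) := .of_isTorsionFree k _
  rw [eq_C_of_pderiv_eq_zero hderiv, aeval_C] at hp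
  have hcoeff : coeff 0 p = 0 := Subtype.ext hp
  rw [eq_C_of_pderiv_eq_zero hderiv, hcoeff, C_0]

theorem mem_adjoin_of_forall_notMem (h : IsSliceSystem D s) (t : Finset ι) {a : A}
    (ha : ∀ i ∉ t, D i a = 0) : a ∈ Algebra.adjoin (jointConstants D) (Set.range s) := by
  classical
  induction t using Finset.induction_on generalizing a with
  | empty =>
    have ha' : a ∈ jointConstants D := fun i ↦ ha i (Finset.notMem_empty i)
    exact Subalgebra.algebraMap_mem _ (⟨a, ha'⟩ : jointConstants D)
  | insert j t _ ih_t =>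
  obtain ⟨n, hn⟩ := h.exists_iterate_eq_zero j a
  induction n generalizing a with
  | zero => rw [show a = 0 from hn]; exact zero_mem _
  | succ n ih_n =>
    -- Subtracting `s j ^ n * c` from `a` lowers its order of nilpotency under `D j`.
    set c := (n.factorial : k)⁻¹ • (D j)^[n] a
    have hc_self : D j c = 0 := by
      rw [Derivation.map_smul, ← Function.iterate_succ_apply' (D j), hn, smul_zero]
    have hc : ∀ i ∉ insert j t, D i c = 0 := fun i hi ↦ by
      rw [Derivation.map_smul, ((h.commute i j).iterate_right n).eq, ha i hi, iterate_map_zero,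
        smul_zero]
    have hc_mem : c ∈ Algebra.adjoin (jointConstants D) (Set.range s) := ih_t fun i hi ↦ by
      obtain rfl | hij := eq_or_ne i j
      · exact hc_self
      · exact hc i (by simp [hij, hi])
    have hs_mem : s j ^ n * c ∈ Algebra.adjoin (jointConstants D) (Set.range s) :=
      mul_mem (pow_mem (Algebra.subset_adjoin (Set.mem_range_self j)) n) hc_mem
    have hsub_mem : a - s j ^ n * c ∈ Algebra.adjoin (jointConstants D) (Set.range s) := by
      refine ih_n (fun i hi ↦ ?_) ?_
      · have hij : i ≠ j := fun hij ↦ hi (by simp [hij])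
        simp [ha i hi, hc i hi, Derivation.leibniz_pow, h.apply_of_ne i j hij]
      · have hfact : (n.factorial : k) ≠ 0 := mod_cast n.factorial_ne_zero
        rw [iterate_map_sub, iterate_derivation_slice_pow_mul (h.apply_self j) hc_self,
          ← nsmul_eq_mul, ← Nat.cast_smul_eq_nsmul k, smul_inv_smul₀ hfact, sub_self]
    simpa using add_mem hsub_mem hs_mem

theorem adjoin_range_eq_top [Finite ι] (h : IsSliceSystem D s) :
    Algebra.adjoin (jointConstants D) (Set.range s) = ⊤ := by
  have := Fintype.ofFinite ι
  exact eq_top_iff.2 fun a _ ↦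
    h.mem_adjoin_of_forall_notMem Finset.univ fun i hi ↦ absurd (Finset.mem_univ i) hi

/-- An algebra with a finite slice system is the polynomial algebra in the slices over the
constants. -/
noncomputable def mvPolynomialEquiv [Finite ι] (h : IsSliceSystem D s) :
    MvPolynomial ι (jointConstants D) ≃ₐ[jointConstants D] A :=
  h.algebraicIndependent.aevalEquiv.trans <|
    (Subalgebra.equivOfEq _ _ h.adjoin_range_eq_top).trans Subalgebra.topEquiv

theorem mvPolynomialEquiv_X [Finite ι] (h : IsSliceSystem D s) (i : ι) :
    h.mvPolynomialEquiv (X i) = s i := by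
  simp [mvPolynomialEquiv]

end IsSliceSystem

end SliceSystem

section SeriesShuffle

variable {X R : Type*} [CommSemiring R]

/-- The shuffle product of two noncommutative power series, given by their coefficients. It is
determined by the constant coefficient being multiplicative and the removal of a fixed first letter
being a derivation. -/
def seriesShuffle (f g : List X → R) : List X → R
  | [] => f [] * g []
  | c :: w => seriesShuffle (f ∘ List.cons c) g w + seriesShuffle f (g ∘ List.cons c) w

theorem seriesShuffle_comp_cons (f g : List X → R) (c : X) :
    seriesShuffle f g ∘ List.cons c =
      seriesShuffle (f ∘ List.cons c) g + seriesShuffle f (g ∘ List.cons c) :=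
  rfl

theorem seriesShuffle_comm (f g : List X → R) : seriesShuffle f g = seriesShuffle g f := by
  funext w
  induction w generalizing f g with
  | nil => exact mul_comm _ _
  | cons c w ih => rw [seriesShuffle, seriesShuffle, ih, ih f, add_comm]

theorem seriesShuffle_add_left (f f' g : List X → R) :
    seriesShuffle (f + f') g = seriesShuffle f g + seriesShuffle f' g := by
  funext w
  induction w generalizing f f' g with
  | nil => exact add_mul _ _ _
  | cons c w ih =>
    simp only [seriesShuffle, Pi.add_comp, Pi.add_apply, ih]
    ring

theorem seriesShuffle_smul_left (r : R) (f g : List X → R) :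
    seriesShuffle (r • f) g = r • seriesShuffle f g := by
  funext w
  induction w generalizing f g with
  | nil => exact mul_assoc _ _ _
  | cons c w ih => simp only [seriesShuffle, Pi.smul_comp, Pi.smul_apply, ih, smul_add]

/-- `seriesShuffle` as a bilinear map. -/
def seriesShuffleBilin : (List X → R) →ₗ[R] (List X → R) →ₗ[R] (List X → R) :=
  LinearMap.mk₂ R seriesShuffle seriesShuffle_add_left seriesShuffle_smul_left
    (fun f g g' ↦ by simp only [seriesShuffle_comm f, seriesShuffle_add_left])
    (fun r f g ↦ by simp only [seriesShuffle_comm f, seriesShuffle_smul_left])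

theorem seriesShuffleBilin_apply (f g : List X → R) :
    seriesShuffleBilin f g = seriesShuffle f g :=
  rfl

theorem seriesShuffle_zero_left (g : List X → R) : seriesShuffle 0 g = 0 :=
  LinearMap.map_zero₂ seriesShuffleBilin g

theorem seriesShuffle_zero_right (f : List X → R) : seriesShuffle f 0 = 0 :=
  map_zero (seriesShuffleBilin f)

theorem seriesShuffle_assoc (f g h : List X → R) :
    seriesShuffle (seriesShuffle f g) h = seriesShuffle f (seriesShuffle g h) := by
  funext w
  induction w generalizing f g h with
  | nil => exact mul_assoc _ _ _
  | cons c w ih =>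
    rw [seriesShuffle, seriesShuffle, seriesShuffle_comp_cons, seriesShuffle_comp_cons]
    simp only [← seriesShuffleBilin_apply, map_add, LinearMap.add_apply, Pi.add_apply]
    simp only [seriesShuffleBilin_apply, ih, add_assoc]

theorem seriesShuffle_comp_append_singleton (f g : List X → R) (c : X) :
    seriesShuffle f g ∘ (· ++ [c]) =
      seriesShuffle (f ∘ (· ++ [c])) g + seriesShuffle f (g ∘ (· ++ [c])) := by
  funext w
  induction w generalizing f g with
  | nil => simp [seriesShuffle]
  | cons a w ih =>
    have ih' (f g : List X → R) : seriesShuffle f g (w ++ [c]) = _ := ih f g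
    simp only [Function.comp_apply, List.cons_append, seriesShuffle, ih', Pi.add_apply]
    exact add_add_add_comm _ _ _ _

theorem single_nil_comp_cons (r : R) (c : X) :
    ⇑(Finsupp.single [] r) ∘ List.cons c = 0 := by
  ext; simp

theorem single_cons_comp_cons [DecidableEq X] (r : R) (a c : X) (u : List X) :
    ⇑(Finsupp.single (a :: u) r) ∘ List.cons c = if a = c then ⇑(Finsupp.single u r) else 0 := by
  ext w
  split_ifs with h <;> simp [h, Finsupp.single_apply]

theorem single_singleton_comp_append_singleton [DecidableEq X] (r : R) (b c : X) :
    ⇑(Finsupp.single [b] r) ∘ (· ++ [c]) = if b = c then ⇑(Finsupp.single [] r) else 0 := by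
  ext w
  split_ifs with h <;> cases w <;> simp [h]

theorem seriesShuffle_single_nil_left (f : List X → R) :
    seriesShuffle (Finsupp.single [] 1) f = f := by
  funext w
  induction w generalizing f with
  | nil => simp [seriesShuffle]
  | cons c w ih =>
    rw [seriesShuffle, single_nil_comp_cons, ih, seriesShuffle_zero_left]
    exact zero_add _

end SeriesShuffle

section MulSh

variable {X : Type} [DecidableEq X]

theorem shc_eq_seriesShuffle (u v w : List X) :
    (shc u v w : ℚ) = seriesShuffle (Finsupp.single u (1 : ℚ)) (Finsupp.single v (1 : ℚ)) w := by
  induction w generalizing u v with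
  | nil => cases u <;> cases v <;> simp [shc, seriesShuffle]
  | cons c w ih =>
    cases u <;> cases v <;>
      simp only [shc, seriesShuffle, single_nil_comp_cons, single_cons_comp_cons,
        seriesShuffle_zero_left, seriesShuffle_zero_right, Nat.cast_add, Nat.cast_ite,
        Nat.cast_zero, Pi.zero_apply, ih] <;>
      split_ifs <;> simp only [seriesShuffle_zero_left, seriesShuffle_zero_right, Pi.zero_apply]

theorem perm_append_of_shc_ne_zero {u v w : List X} (h : shc u v w ≠ 0) : w.Perm (u ++ v) := by
  induction w generalizing u v with
  | nil =>
    obtain ⟨rfl, rfl⟩ : u = [] ∧ v = [] := by simpa [shc] using h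
    rfl
  | cons c w ih =>
    rw [shc.eq_def] at h
    rcases not_and_or.1 (mt Nat.add_eq_zero_iff.2 h) with hu | hv
    · rcases u with _ | ⟨a, u⟩
      · exact absurd rfl hu
      · obtain ⟨rfl, hne⟩ : a = c ∧ shc u v w ≠ 0 := by simpa using hu
        exact (ih hne).cons a
    · rcases v with _ | ⟨b, v⟩
      · exact absurd rfl hv
      · obtain ⟨rfl, hne⟩ : b = c ∧ shc u v w ≠ 0 := by simpa using hv
        exact ((ih hne).cons b).trans List.perm_middle.symm

theorem shPoly_apply (u v w : List X) : shPoly u v w = shc u v w := by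
  simp only [shPoly, Finsupp.finsetSum_apply, Finsupp.smul_apply, Finsupp.single_apply,
    smul_eq_mul, mul_ite, mul_one, mul_zero, Finset.sum_ite_eq', List.mem_toFinset,
    List.mem_permutations]
  split_ifs with h
  · rfl
  · rw [eq_comm, Nat.cast_eq_zero]
    exact not_imp_comm.1 perm_append_of_shc_ne_zero h

theorem coe_shPoly (u v : List X) :
    ⇑(shPoly u v) = seriesShuffle (Finsupp.single u 1) (Finsupp.single v 1) :=
  funext fun w ↦ (shPoly_apply u v w).trans (shc_eq_seriesShuffle u v w)

theorem coe_mulSh (f g : List X →₀ ℚ) : ⇑(mulSh f g) = seriesShuffle f g := by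
  have expand (f : List X →₀ ℚ) :
      ⇑f = ∑ u ∈ f.support, f u • ⇑(Finsupp.single u (1 : ℚ)) := by
    conv_lhs => rw [← Finsupp.sum_single f]
    simp [Finsupp.sum, Finsupp.coe_finsetSum, ← Finsupp.coe_smul]
  rw [expand f, expand g, ← seriesShuffleBilin_apply]
  simp only [map_sum, map_smul, LinearMap.sum_apply, LinearMap.smul_apply, seriesShuffleBilin_apply,
    mulSh, Finsupp.sum, Finsupp.coe_finsetSum, Finsupp.coe_smul, coe_shPoly, mul_smul,
    Finset.smul_sum]
  rw [Finset.sum_comm]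
  exact Finset.sum_congr rfl fun v _ ↦ Finset.sum_congr rfl fun u _ ↦ smul_comm _ _ _

theorem goodSpan_eq_supported (a b : X) :
    goodSpan a b =
      Finsupp.supported ℚ ℚ {w | w.head? ≠ some a ∧ w.getLast? ≠ some b} := by
  rw [Finsupp.supported_eq_span_single, goodSpan]
  congr 1
  ext p
  simp [and_assoc, eq_comm]

theorem mem_goodSpan_iff {a b : X} {p : List X →₀ ℚ} :
    p ∈ goodSpan a b ↔ (∀ w, p (a :: w) = 0) ∧ ∀ w, p (w ++ [b]) = 0 := by
  rw [goodSpan_eq_supported, Finsupp.mem_supported']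
  simp only [Set.mem_ofPred_eq, not_and_or, not_not, List.head?_eq_some_iff,
    List.getLast?_eq_some_iff]
  grind

end MulSh

/-- The free `ℚ`-vector space on words, as a type of its own to carry the shuffle product. Its
elements are functions sending a word to its coefficient. -/
def ShuffleAlgebra (X : Type) : Type :=
  List X →₀ ℚ

namespace ShuffleAlgebra

section Words

variable {X : Type}

noncomputable instance : AddCommGroup (ShuffleAlgebra X) :=
  inferInstanceAs (AddCommGroup (List X →₀ ℚ))

noncomputable instance : Module ℚ (ShuffleAlgebra X) :=
  inferInstanceAs (Module ℚ (List X →₀ ℚ))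

instance : FunLike (ShuffleAlgebra X) (List X) ℚ :=
  inferInstanceAs (FunLike (List X →₀ ℚ) (List X) ℚ)

/-- The identity map from the free vector space on words to the shuffle algebra. -/
noncomputable def ofFinsupp : (List X →₀ ℚ) ≃ₗ[ℚ] ShuffleAlgebra X :=
  LinearEquiv.refl ℚ _

theorem coe_add (f g : ShuffleAlgebra X) : ⇑(f + g) = f + g :=
  rfl

theorem coe_smul (r : ℚ) (f : ShuffleAlgebra X) : ⇑(r • f) = r • ⇑f :=
  rfl

/-- A word, as an element of the shuffle algebra. -/
noncomputable def word (w : List X) : ShuffleAlgebra X :=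
  ofFinsupp (Finsupp.single w 1)

noncomputable instance : One (ShuffleAlgebra X) :=
  ⟨word []⟩

theorem exists_iterate_eq_zero_of_apply_eq {D : ShuffleAlgebra X → ShuffleAlgebra X}
    {c : List X → List X} (hD : ∀ f w, D f w = f (c w)) (hc : ∀ w, w.length < (c w).length)
    (f : ShuffleAlgebra X) : ∃ n : ℕ, D^[n] f = 0 := by
  have iterate_apply (n w) : D^[n] f w = f (c^[n] w) := by
    induction n generalizing w with
    | zero => rfl
    | succ n ih => rw [Function.iterate_succ_apply', hD, ih, Function.iterate_succ_apply]
  have le_length (n w) : n ≤ (c^[n] w).length := by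
    induction n with
    | zero => exact Nat.zero_le _
    | succ n ih =>
      rw [Function.iterate_succ_apply']
      exact ih.trans_lt (hc _)
  let N := (ofFinsupp.symm f).support.sup List.length
  refine ⟨N + 1, DFunLike.ext _ _ fun w ↦ ?_⟩
  rw [iterate_apply]
  by_contra hne
  have hle : (c^[N + 1] w).length ≤ N :=
    Finset.le_sup (f := List.length) (Finsupp.mem_support_iff.2 hne)
  exact absurd ((le_length (N + 1) w).trans hle) (Nat.not_succ_le_self N)

end Words

variable {X : Type} [DecidableEq X]

noncomputable instance : Mul (ShuffleAlgebra X) :=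
  ⟨fun f g ↦ ofFinsupp (mulSh (ofFinsupp.symm f) (ofFinsupp.symm g))⟩

theorem coe_mul (f g : ShuffleAlgebra X) : ⇑(f * g) = seriesShuffle f g :=
  coe_mulSh f g

protected theorem mul_comm (f g : ShuffleAlgebra X) : f * g = g * f :=
  DFunLike.coe_injective <| by simp only [coe_mul, seriesShuffle_comm]

protected theorem one_mul (f : ShuffleAlgebra X) : 1 * f = f :=
  DFunLike.coe_injective <| (coe_mul _ _).trans (seriesShuffle_single_nil_left _)

protected theorem add_mul (f g h : ShuffleAlgebra X) : (f + g) * h = f * h + g * h :=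
  DFunLike.coe_injective <| by simp only [coe_mul, coe_add, seriesShuffle_add_left]

protected theorem smul_mul (r : ℚ) (f g : ShuffleAlgebra X) : (r • f) * g = r • (f * g) :=
  DFunLike.coe_injective <| by simp only [coe_mul, coe_smul, seriesShuffle_smul_left]

protected theorem zero_mul (f : ShuffleAlgebra X) : 0 * f = 0 := by
  simpa only [zero_smul] using ShuffleAlgebra.smul_mul 0 0 f

noncomputable instance : CommRing (ShuffleAlgebra X) :=
  { (inferInstance : AddCommGroup (ShuffleAlgebra X)) with
    mul_comm := ShuffleAlgebra.mul_comm
    mul_assoc f g h := DFunLike.coe_injective <| by simp only [coe_mul, seriesShuffle_assoc]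
    one_mul := ShuffleAlgebra.one_mul
    mul_one f := by rw [ShuffleAlgebra.mul_comm, ShuffleAlgebra.one_mul]
    zero_mul := ShuffleAlgebra.zero_mul
    mul_zero f := by rw [ShuffleAlgebra.mul_comm, ShuffleAlgebra.zero_mul]
    right_distrib := ShuffleAlgebra.add_mul
    left_distrib f g h := by simp only [ShuffleAlgebra.mul_comm f, ShuffleAlgebra.add_mul] }

noncomputable instance : Algebra ℚ (ShuffleAlgebra X) :=
  Algebra.ofModule ShuffleAlgebra.smul_mul fun r f g ↦ by
    rw [mul_comm, ShuffleAlgebra.smul_mul, mul_comm]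

/-- Removal of the letter `a` at the beginning of words, killing the words that do not begin with
`a`. -/
noncomputable def derivHead (a : X) : Derivation ℚ (ShuffleAlgebra X) (ShuffleAlgebra X) :=
  Derivation.mk' (ofFinsupp.conj (Finsupp.lcomapDomain (List.cons a) List.cons_injective))
    fun f g ↦ DFunLike.coe_injective <| by
      rw [smul_eq_mul, smul_eq_mul, mul_comm g, add_comm, coe_add, coe_mul, coe_mul]
      exact (congrArg (· ∘ List.cons a) (coe_mul f g)).trans (seriesShuffle_comp_cons _ _ _)

/-- Removal of the letter `b` at the end of words, killing the words that do not end with `b`. -/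
noncomputable def derivLast (b : X) : Derivation ℚ (ShuffleAlgebra X) (ShuffleAlgebra X) :=
  Derivation.mk'
    (ofFinsupp.conj (Finsupp.lcomapDomain (· ++ [b]) (List.append_left_injective [b])))
    fun f g ↦ DFunLike.coe_injective <| by
      rw [smul_eq_mul, smul_eq_mul, mul_comm g, add_comm, coe_add, coe_mul, coe_mul]
      exact (congrArg (· ∘ (· ++ [b])) (coe_mul f g)).trans
        (seriesShuffle_comp_append_singleton _ _ _)

theorem derivHead_apply (a : X) (f : ShuffleAlgebra X) (w : List X) :
    derivHead a f w = f (a :: w) :=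
  rfl

theorem derivLast_apply (b : X) (f : ShuffleAlgebra X) (w : List X) :
    derivLast b f w = f (w ++ [b]) :=
  rfl

theorem derivHead_commute_derivLast (a b : X) : Function.Commute (derivHead a) (derivLast b) :=
  fun _ ↦ DFunLike.ext _ _ fun _ ↦ rfl

theorem derivHead_word_singleton (a b : X) : derivHead a (word [b]) = if b = a then 1 else 0 :=
  DFunLike.coe_injective <| (single_cons_comp_cons 1 b a []).trans <| by split_ifs <;> rfl

theorem derivLast_word_singleton (a b : X) : derivLast a (word [b]) = if b = a then 1 else 0 :=
  DFunLike.coe_injective <|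
    (single_singleton_comp_append_singleton 1 b a).trans <| by split_ifs <;> rfl

/-- The two derivations of the shuffle algebra whose joint kernel is spanned by the words that do
not begin with `x₁` and do not end with `x₀`. -/
noncomputable def endDerivations (x₀ x₁ : X) :
    Fin 2 → Derivation ℚ (ShuffleAlgebra X) (ShuffleAlgebra X) :=
  ![derivLast x₀, derivHead x₁]

theorem isSliceSystem_endDerivations {x₀ x₁ : X} (hx : x₀ ≠ x₁) :
    IsSliceSystem (endDerivations x₀ x₁) ![word [x₀], word [x₁]] where
  commute := by
    simp [Fin.forall_fin_two, endDerivations, derivHead_commute_derivLast,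
      (derivHead_commute_derivLast _ _).symm, Function.Commute.refl]
  exists_iterate_eq_zero :=
    Fin.forall_fin_two.2 ⟨exists_iterate_eq_zero_of_apply_eq (derivLast_apply x₀) (by simp),
      exists_iterate_eq_zero_of_apply_eq (derivHead_apply x₁) (by simp)⟩
  apply_self := by
    simp [Fin.forall_fin_two, endDerivations, derivHead_word_singleton, derivLast_word_singleton]
  apply_of_ne := by
    simp [Fin.forall_fin_two, endDerivations, derivHead_word_singleton, derivLast_word_singleton,
      hx, hx.symm]

/-- The subalgebra `C` of convergent elements, defined as a joint kernel of derivations; it is the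
span of the words that do not begin with `x₁` and do not end with `x₀` by `mem_convergent`. -/
noncomputable abbrev convergent (x₀ x₁ : X) : Subalgebra ℚ (ShuffleAlgebra X) :=
  jointConstants (endDerivations x₀ x₁)

theorem mem_convergent {x₀ x₁ : X} {f : ShuffleAlgebra X} :
    f ∈ convergent x₀ x₁ ↔ ofFinsupp.symm f ∈ goodSpan x₁ x₀ := by
  rw [mem_goodSpan_iff, mem_jointConstants, Fin.forall_fin_two, and_comm]
  exact and_congr DFunLike.ext_iff DFunLike.ext_iff

/-- The isomorphism `C[x₀, x₁] ≃ A`, in which the letters `x₀` and `x₁` correspond to the variables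
`0` and `1`. -/
noncomputable def convergentPolynomialEquiv {x₀ x₁ : X} (hx : x₀ ≠ x₁) :
    MvPolynomial (Fin 2) (convergent x₀ x₁) ≃ₐ[convergent x₀ x₁] ShuffleAlgebra X :=
  (isSliceSystem_endDerivations hx).mvPolynomialEquiv

theorem convergentPolynomialEquiv_X {x₀ x₁ : X} (hx : x₀ ≠ x₁) (i : Fin 2) :
    convergentPolynomialEquiv hx (MvPolynomial.X i) =
      (![word [x₀], word [x₁]] : Fin 2 → ShuffleAlgebra X) i :=
  (isSliceSystem_endDerivations hx).mvPolynomialEquiv_X i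

section AlgHom

variable {B : Type*} [Semiring B] [Algebra ℚ B]

/-- A linear map on words that is multiplicative for `mulSh`, as an algebra morphism. -/
noncomputable def algHomOfMulSh (J : (List X →₀ ℚ) →ₗ[ℚ] B) (h1 : J (Finsupp.single [] 1) = 1)
    (hmul : ∀ f g, J (mulSh f g) = J f * J g) : ShuffleAlgebra X →ₐ[ℚ] B :=
  AlgHom.ofLinearMap (J ∘ₗ ofFinsupp.symm.toLinearMap) h1 hmul

/-- A linear map on words that is multiplicative for `mulSh` on the convergent words, as an algebra
morphism. -/
noncomputable def algHomOfGoodSpan {x₀ x₁ : X} (I : (List X →₀ ℚ) →ₗ[ℚ] B)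
    (h1 : I (Finsupp.single [] 1) = 1)
    (hmul : ∀ f g, f ∈ goodSpan x₁ x₀ → g ∈ goodSpan x₁ x₀ → I (mulSh f g) = I f * I g) :
    convergent x₀ x₁ →ₐ[ℚ] B :=
  AlgHom.ofLinearMap (I ∘ₗ ofFinsupp.symm.toLinearMap ∘ₗ (convergent x₀ x₁).val.toLinearMap) h1
    fun f g ↦ hmul _ _ (mem_convergent.1 f.2) (mem_convergent.1 g.2)

end AlgHom

end ShuffleAlgebra

/-- Let `C` be the subalgebra of the shuffle algebra `(A, ⧢)` spanned
by the words not beginning with `x₁` and not ending with `x₀`. Then `A ≅ C[x₀, x₁]` as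
a commutative ℚ-algebra: for every commutative ℚ-algebra `B`, every algebra morphism
`I : C → B` and every choice of values `λ₀, λ₁ ∈ B`, there is a unique extension of `I`
to an algebra morphism `J : (A, ⧢) → B` with `J(x₀) = λ₀` and `J(x₁) = λ₁`. In
particular (taking `B = ℂ`, `λ₀ = λ₁ = 0`), any ℚ-algebra morphism `I : C → ℂ` extends
uniquely to an algebra morphism `Ī : (A, ⧢) → ℂ` with `Ī(x₀) = Ī(x₁) = 0`. -/
theorem shuffle_polynomial_over_convergent {X : Type} [DecidableEq X] (x₀ x₁ : X)
    (hx : x₀ ≠ x₁) (B : Type) [CommRing B] [Algebra ℚ B]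
    (I : (List X →₀ ℚ) →ₗ[ℚ] B)
    (hI1 : I (Finsupp.single [] 1) = 1)
    (hImul : ∀ f g : List X →₀ ℚ, f ∈ goodSpan x₁ x₀ → g ∈ goodSpan x₁ x₀ →
      I (mulSh f g) = I f * I g)
    (lam₀ lam₁ : B) :
    ∃! J : (List X →₀ ℚ) →ₗ[ℚ] B,
      J (Finsupp.single [] 1) = 1 ∧
      (∀ f g : List X →₀ ℚ, J (mulSh f g) = J f * J g) ∧
      J (Finsupp.single [x₀] 1) = lam₀ ∧
      J (Finsupp.single [x₁] 1) = lam₁ ∧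
      ∀ p ∈ goodSpan x₁ x₀, J p = I p := by
  obtain ⟨ψ, ⟨hψ_X, hψ_C⟩, hψ_unique⟩ := existsUnique_algHom_of_mvPolynomialEquiv
    (ShuffleAlgebra.convergentPolynomialEquiv hx)
    (ShuffleAlgebra.algHomOfGoodSpan I hI1 hImul) ![lam₀, lam₁]
  simp only [ShuffleAlgebra.convergentPolynomialEquiv_X] at hψ_X hψ_unique
  refine ⟨ψ.toLinearMap ∘ₗ ShuffleAlgebra.ofFinsupp.toLinearMap,
    ⟨map_one ψ, fun f g ↦ map_mul ψ _ _, hψ_X 0, hψ_X 1,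
      fun p hp ↦ hψ_C ⟨_, ShuffleAlgebra.mem_convergent.2 hp⟩⟩, ?_⟩
  rintro J ⟨hJ_one, hJ_mul, hJ₀, hJ₁, hJ⟩
  have hJ_eq : ShuffleAlgebra.algHomOfMulSh J hJ_one hJ_mul = ψ :=
    hψ_unique _ ⟨Fin.forall_fin_two.2 ⟨hJ₀, hJ₁⟩,
      fun c ↦ hJ _ (ShuffleAlgebra.mem_convergent.1 c.2)⟩
  rw [← hJ_eq]
  rfl
end

section
/- Let k be a commutative ℚ-algebra and Γ a finite abelian group. For each series ψ ∈ k⟨⟨X_Γ⟩⟩ with zero constant term, let d_ψ be the continuous derivation of k⟨⟨X_Γ⟩⟩ determined by d_ψ(x₀) = 0 and d_ψ(x_σ) = [x_σ, t_σ(ψ)] for σ ∈ Γ, where t_σ is the algebra automorphism fixing x₀ and sending x_τ to x_{στ}. Define s_ψ(φ) = ψφ + d_ψ(φ). Then the assignment ψ ↦ s_ψ satisfies s_{⟨ψ₁,ψ₂⟩} = [s_{ψ₁}, s_{ψ₂}] where ⟨ψ₁,ψ₂⟩ := s_{ψ₁}(ψ₂) − s_{ψ₂}(ψ₁), and in particular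 ⟨·,·⟩ is a Lie bracket on series with zero constant term. -/
/- Noncommutative formal power series over the alphabet X_Γ = {x₀} ∪ {x_σ : σ ∈ Γ},
modelled as coefficient functions `List (Option Γ) → k` (none = x₀, some σ = x_σ). -/

open Finset

/-- Noncommutative series: a coefficient for each word. -/
abbrev Ser (X k : Type) : Type := List X → k

/-- The finset of all words of length at most `L` over a finite alphabet. -/
def wordsLe (X : Type) [Fintype X] [DecidableEq X] (L : ℕ) : Finset (List X) :=
  (Finset.range (L + 1)).biUnion fun n =>
    (Fintype.piFinset fun _ : Fin n => (Finset.univ : Finset X)).image List.ofFn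

/-- The unit series 1. -/
def sone {X k : Type} [CommRing k] : Ser X k := fun w =>
  match w with
  | [] => 1
  | _ => 0

/-- Product of noncommutative series (Cauchy product over factorizations of a word). -/
def smul2 {X k : Type} [CommRing k] (F G : Ser X k) : Ser X k := fun w =>
  ∑ p ∈ Finset.range (w.length + 1), F (w.take p) * G (w.drop p)

/-- The series given by a single word with coefficient 1. -/
def monom {X k : Type} [CommRing k] [DecidableEq X] (v : List X) : Ser X k :=
  fun w => if w = v then 1 else 0

/-- The automorphism t_σ of `k⟨⟨X_Γ⟩⟩` fixing x₀ and sending x_τ to x_{στ},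
acting on series. -/
def tser {Γ k : Type} [CommGroup Γ] [CommRing k] (σ : Γ) (F : Ser (Option Γ) k) :
    Ser (Option Γ) k :=
  fun w => F (w.map (Option.map (fun τ => σ⁻¹ * τ)))

/-- The value of the special derivation d_ψ on the letters:
`d_ψ(x₀) = 0` and `d_ψ(x_σ) = [x_σ, t_σ(ψ)]`. -/
def dlet {Γ k : Type} [CommGroup Γ] [DecidableEq Γ] [CommRing k]
    (ψ : Ser (Option Γ) k) : Option Γ → Ser (Option Γ) k
  | none => fun _ => 0
  | some σ => fun w =>
      smul2 (monom [some σ]) (tser σ ψ) w - smul2 (tser σ ψ) (monom [some σ]) w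

/-- The special derivation d_ψ evaluated on a single word. -/
def dword {Γ k : Type} [CommGroup Γ] [DecidableEq Γ] [CommRing k]
    (ψ : Ser (Option Γ) k) (w : List (Option Γ)) : Ser (Option Γ) k := fun u =>
  ∑ i ∈ Finset.range w.length,
    smul2 (monom (w.take i)) (smul2 (dlet ψ (w.getD i none)) (monom (w.drop (i + 1)))) u

/-- The (Γ-equivariant) special derivation d_ψ of `k⟨⟨X_Γ⟩⟩`, with
`d_ψ(x₀) = 0` and `d_ψ(x_σ) = [x_σ, t_σ(ψ)]`, applied to a series. -/
def dser {Γ k : Type} [CommGroup Γ] [Fintype Γ] [DecidableEq Γ] [CommRing k]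
    (ψ F : Ser (Option Γ) k) : Ser (Option Γ) k := fun u =>
  ∑ w ∈ wordsLe (Option Γ) u.length, F w * dword ψ w u

/-- The tangential action operator `s_ψ(φ) = ψ·φ + d_ψ(φ)`. -/
def sact {Γ k : Type} [CommGroup Γ] [Fintype Γ] [DecidableEq Γ] [CommRing k]
    (ψ F : Ser (Option Γ) k) : Ser (Option Γ) k := fun u =>
  smul2 ψ F u + dser ψ F u

/-- The Ihara bracket `⟨ψ₁, ψ₂⟩ := s_{ψ₁}(ψ₂) − s_{ψ₂}(ψ₁)`. -/
def ibr {Γ k : Type} [CommGroup Γ] [Fintype Γ] [DecidableEq Γ] [CommRing k]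
    (ψ₁ ψ₂ : Ser (Option Γ) k) : Ser (Option Γ) k := fun u =>
  sact ψ₁ ψ₂ u - sact ψ₂ ψ₁ u

/-!
A derivation of `k⟨⟨X⟩⟩` over a finite alphabet is determined by its values on the letters, because
`F = F(1) + ∑ x · (left quotient of F by x)`. Comparing values on letters shows that `d_ψ` commutes
with each `t_σ`, and then that `d_{⟨ψ₁,ψ₂⟩} = [d_{ψ₁}, d_{ψ₂}]`. Since
`⟨ψ₁,ψ₂⟩ = [ψ₁,ψ₂] + d_{ψ₁}(ψ₂) − d_{ψ₂}(ψ₁)`, expanding the commutator of `s_ψ = ψ· + d_ψ` gives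
`s_{⟨ψ₁,ψ₂⟩} = [s_{ψ₁}, s_{ψ₂}]`. This identity says that `(ψ, φ) ↦ s_ψ(φ)` is a left pre-Lie
product, and the commutator of a pre-Lie product is a Lie bracket.
-/

attribute [local instance] LieRing.ofAssociativeRing

section Derivations

variable (k A : Type*) [CommRing k] [NonUnitalNonAssocRing A] [Module k A]
  [IsScalarTower k A A] [SMulCommClass k A A]

/-- The Lie algebra of `k`-linear derivations of a `k`-algebra `A`, which need be neither
commutative (as `Derivation` requires) nor associative. -/
def derivationLieSubalgebra : LieSubalgebra k (Module.End k A) where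
  carrier := {D | ∀ a b, D (a * b) = D a * b + a * D b}
  zero_mem' a b := by simp
  add_mem' {D E} hD hE a b := by
    simp only [LinearMap.add_apply, hD a b, hE a b, add_mul, mul_add]
    abel
  smul_mem' c D hD a b := by
    simp only [LinearMap.smul_apply, hD a b, smul_add, smul_mul_assoc, mul_smul_comm]
  lie_mem' {D E} hD hE a b := by
    simp only [Ring.lie_def, LinearMap.sub_apply, Module.End.mul_apply, hD _ _, hE _ _, map_add,
      sub_mul, mul_sub]
    abel

variable {k A}

theorem mem_derivationLieSubalgebra {D : Module.End k A} :
    D ∈ derivationLieSubalgebra k A ↔ ∀ a b, D (a * b) = D a * b + a * D b := Iff.rfl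

theorem conj_mem_derivationLieSubalgebra {B : Type*} [NonUnitalNonAssocRing B] [Module k B]
    [IsScalarTower k B B] [SMulCommClass k B B] {D : Module.End k A}
    (hD : D ∈ derivationLieSubalgebra k A) (e : A ≃ₗ[k] B) (he : ∀ a b, e (a * b) = e a * e b) :
    e.conj D ∈ derivationLieSubalgebra k B := by
  have he_symm (a b : B) : e.symm (a * b) = e.symm a * e.symm b :=
    e.injective (by simp [he])
  intro a b
  simp [he, he_symm, mem_derivationLieSubalgebra.1 hD]

theorem map_one_of_mem_derivationLieSubalgebra {A : Type*} [NonAssocRing A] [Module k A]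
    [IsScalarTower k A A] [SMulCommClass k A A] {D : Module.End k A}
    (hD : D ∈ derivationLieSubalgebra k A) : D 1 = 0 := by
  simpa using hD 1 1

theorem lie_mulLeft_add {A : Type*} [NonUnitalRing A] [Module k A]
    [IsScalarTower k A A] [SMulCommClass k A A] {D E : Module.End k A}
    (hD : D ∈ derivationLieSubalgebra k A) (hE : E ∈ derivationLieSubalgebra k A) (a b : A) :
    ⁅LinearMap.mulLeft k a + D, LinearMap.mulLeft k b + E⁆ =
      LinearMap.mulLeft k (⁅a, b⁆ + D b - E a) + ⁅D, E⁆ := by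
  ext c
  simp only [Ring.lie_def, LinearMap.sub_apply, LinearMap.add_apply, Module.End.mul_apply,
    LinearMap.mulLeft_apply, map_add, hD _ _, hE _ _]
  noncomm_ring

end Derivations

/-- The algebra `k⟨⟨X⟩⟩` of noncommutative series: a copy of `Ser X k` whose multiplication is
`smul2` instead of the pointwise product that `Ser X k` has as a function type. -/
def NCSeries (X k : Type) : Type := Ser X k

namespace NCSeries

section Ring

variable {X k : Type}

@[ext]
theorem ext {F G : NCSeries X k} (h : ∀ u, F u = G u) : F = G := funext h

/-- The left quotient of `F` by the letter `x`: the series `G` such that `x G` is the part of `F`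
supported on the words that start with `x`. -/
def tail (x : X) (F : NCSeries X k) : NCSeries X k := fun w => F (x :: w)

theorem tail_apply (x : X) (F : NCSeries X k) (u : List X) : tail x F u = F (x :: u) := rfl

variable [CommRing k]

instance : AddCommGroup (NCSeries X k) := inferInstanceAs (AddCommGroup (List X → k))

instance : Module k (NCSeries X k) := inferInstanceAs (Module k (List X → k))

instance : One (NCSeries X k) := ⟨sone⟩

instance : Mul (NCSeries X k) := ⟨smul2⟩

@[simp]
theorem add_apply (F G : NCSeries X k) (u : List X) : (F + G) u = F u + G u := rfl

@[simp]
theorem sub_apply (F G : NCSeries X k) (u : List X) : (F - G) u = F u - G u := rfl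

@[simp]
theorem zero_apply (u : List X) : (0 : NCSeries X k) u = 0 := rfl

@[simp]
theorem smul_apply (c : k) (F : NCSeries X k) (u : List X) : (c • F) u = c * F u := rfl

@[simp]
theorem sum_apply {ι : Type*} (s : Finset ι) (F : ι → NCSeries X k) (u : List X) :
    (∑ i ∈ s, F i) u = ∑ i ∈ s, F i u :=
  Finset.sum_apply u s (fun i => (F i : List X → k))

@[simp]
theorem one_nil : (1 : NCSeries X k) [] = 1 := rfl

@[simp]
theorem one_cons (x : X) (u : List X) : (1 : NCSeries X k) (x :: u) = 0 := rfl

@[simp]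
theorem tail_one (x : X) : tail x (1 : NCSeries X k) = 0 := rfl

theorem mul_apply (F G : NCSeries X k) (u : List X) :
    (F * G) u = ∑ p ∈ Finset.range (u.length + 1), F (u.take p) * G (u.drop p) := rfl

instance : NonUnitalNonAssocRing (NCSeries X k) where
  left_distrib F G H := by ext u; simp [mul_apply, mul_add, Finset.sum_add_distrib]
  right_distrib F G H := by ext u; simp [mul_apply, add_mul, Finset.sum_add_distrib]
  zero_mul F := by ext u; simp [mul_apply]
  mul_zero F := by ext u; simp [mul_apply]

instance : IsScalarTower k (NCSeries X k) (NCSeries X k) where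
  smul_assoc c F G := by ext u; simp [mul_apply, mul_assoc, Finset.mul_sum]

instance : SMulCommClass k (NCSeries X k) (NCSeries X k) where
  smul_comm c F G := by ext u; simp [mul_apply, mul_left_comm, Finset.mul_sum]

@[simp]
theorem mul_nil (F G : NCSeries X k) : (F * G) [] = F [] * G [] := by
  simp [mul_apply]

theorem mul_cons (F G : NCSeries X k) (x : X) (u : List X) :
    (F * G) (x :: u) = F [] * G (x :: u) + (tail x F * G) u := by
  simp only [mul_apply, List.length_cons]
  rw [Finset.sum_range_succ']
  simp [add_comm, tail_apply]

theorem tail_mul (x : X) (F G : NCSeries X k) :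
    tail x (F * G) = F [] • tail x G + tail x F * G := by
  ext u
  exact mul_cons F G x u

instance : Ring (NCSeries X k) where
  __ := (inferInstance : NonUnitalNonAssocRing (NCSeries X k))
  mul_assoc F G H := by
    ext u
    induction u generalizing F G with
    | nil => simp [mul_assoc]
    | cons x u ih =>
      simp only [mul_cons, tail_mul, add_mul, smul_mul_assoc, add_apply, smul_apply, mul_nil, ih]
      ring
  one_mul F := by
    ext u
    cases u <;> simp [mul_cons]
  mul_one F := by
    ext u
    induction u generalizing F with
    | nil => simp
    | cons x u ih => simp [mul_cons, ih, tail_apply]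

end Ring

section Words

variable {X k : Type} [CommRing k] [DecidableEq X]

/-- The word `w` as a series. -/
def word (w : List X) : NCSeries X k := monom w

/-- The letter `x` as a series. -/
def letter (x : X) : NCSeries X k := word [x]

theorem word_apply (w u : List X) : (word w : NCSeries X k) u = if u = w then 1 else 0 := rfl

theorem letter_apply (x : X) (u : List X) :
    (letter x : NCSeries X k) u = if u = [x] then 1 else 0 := rfl

theorem word_nil : (word [] : NCSeries X k) = 1 := by
  ext u
  cases u <;> simp [word_apply]

@[simp]
theorem letter_nil (x : X) : (letter x : NCSeries X k) [] = 0 := by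
  simp [letter_apply]

theorem tail_letter (x y : X) :
    tail y (letter x : NCSeries X k) = if y = x then 1 else 0 := by
  ext u
  cases u <;> by_cases h : y = x <;> simp [tail_apply, letter_apply, h]

theorem letter_mul_cons (x y : X) (F : NCSeries X k) (u : List X) :
    ((letter x : NCSeries X k) * F) (y :: u) = if y = x then F u else 0 := by
  rw [mul_cons, tail_letter]
  split_ifs <;> simp

theorem word_cons (x : X) (w : List X) :
    (word (x :: w) : NCSeries X k) = letter x * word w := by
  ext u
  cases u with
  | nil => simp [word_apply]
  | cons y u =>
    rw [letter_mul_cons]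
    by_cases h : y = x <;> simp [word_apply, h]

variable [Fintype X]

theorem eq_smul_one_add_sum_letter_mul_tail (F : NCSeries X k) :
    F = F [] • 1 + ∑ x, letter x * tail x F := by
  ext u
  cases u <;> simp [letter_mul_cons, tail_apply]

theorem eq_zero_of_eq_sum_letter_mul {E : NCSeries X k → NCSeries X k}
    (hE : ∀ F, E F = ∑ x, letter x * E (tail x F)) (F : NCSeries X k) : E F = 0 := by
  ext u
  induction u generalizing F with
  | nil => rw [hE]; simp
  | cons y u ih => rw [hE]; simp [letter_mul_cons, ih]

theorem mem_wordsLe {L : ℕ} {w : List X} : w ∈ wordsLe X L ↔ w.length ≤ L := by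
  simp only [wordsLe, Finset.mem_biUnion, Finset.mem_range, Finset.mem_image,
    Fintype.mem_piFinset, Finset.mem_univ, implies_true, true_and]
  constructor
  · rintro ⟨n, hn, f, rfl⟩
    simpa using Nat.lt_succ_iff.mp hn
  · intro h
    exact ⟨w.length, Nat.lt_succ_of_le h, w.get, List.ofFn_get w⟩

theorem wordsLe_zero : wordsLe X 0 = {[]} := by
  ext w
  simp [mem_wordsLe]

theorem sum_wordsLe_succ {M : Type*} [AddCommMonoid M] (L : ℕ) (f : List X → M) :
    ∑ w ∈ wordsLe X (L + 1), f w = f [] + ∑ x, ∑ w ∈ wordsLe X L, f (x :: w) := by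
  have h : wordsLe X (L + 1) = insert []
      ((Finset.univ ×ˢ wordsLe X L).image fun p : X × List X => p.1 :: p.2) := by
    ext w
    cases w <;> simp [mem_wordsLe]
  rw [h, Finset.sum_insert (by simp), Finset.sum_image, Finset.sum_product]
  rintro ⟨x, w⟩ - ⟨y, v⟩ - h
  simpa using h

theorem mul_apply_eq_sum_word (F G : NCSeries X k) (u : List X) :
    (F * G) u = ∑ w ∈ wordsLe X u.length, G w * (F * word w : NCSeries X k) u := by
  simp only [mul_apply, word_apply, Finset.mul_sum]
  rw [Finset.sum_comm]
  refine Finset.sum_congr rfl fun p _ => ?_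
  have hp : u.drop p ∈ wordsLe X u.length := mem_wordsLe.2 (by simp)
  simp [hp, mul_comm]

theorem mul_cons_eq_sum_word {F : NCSeries X k} (hF : F [] = 0) (G : NCSeries X k) (y : X)
    (u : List X) :
    (F * G) (y :: u) = ∑ w ∈ wordsLe X u.length, G w * (F * word w : NCSeries X k) (y :: u) := by
  simp only [mul_cons, hF, zero_mul, zero_add]
  exact mul_apply_eq_sum_word (tail y F) G u

end Words

section Derivations

variable {X k : Type} [CommRing k] [DecidableEq X]

theorem eq_of_forall_letter [Finite X] {D E : Module.End k (NCSeries X k)}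
    (hD : D ∈ derivationLieSubalgebra k (NCSeries X k))
    (hE : E ∈ derivationLieSubalgebra k (NCSeries X k))
    (h : ∀ x, D (letter x) = E (letter x)) : D = E := by
  cases nonempty_fintype X
  have hDE := sub_mem hD hE
  rw [← sub_eq_zero]
  ext1 F
  refine eq_zero_of_eq_sum_letter_mul (fun F => ?_) F
  conv_lhs => rw [eq_smul_one_add_sum_letter_mul_tail F]
  rw [map_add, map_smul, map_one_of_mem_derivationLieSubalgebra hDE, smul_zero, zero_add, map_sum]
  refine Finset.sum_congr rfl fun x _ => ?_
  rw [hDE, LinearMap.sub_apply, h, sub_self, zero_mul, zero_add]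

variable [Fintype X] {D : Module.End k (NCSeries X k)} {δ : X → NCSeries X k}

theorem mem_derivationLieSubalgebra_of_eq_sum
    (hD : ∀ F, D F = ∑ x, (δ x * tail x F + letter x * D (tail x F))) :
    D ∈ derivationLieSubalgebra k (NCSeries X k) := by
  intro F G
  rw [← sub_eq_zero]
  refine eq_zero_of_eq_sum_letter_mul (E := fun F => D (F * G) - (D F * G + F * D G))
    (fun F => ?_) F
  have hFG : D (F * G) =
      F [] • D G + ∑ x, (δ x * (tail x F * G) + letter x * D (tail x F * G)) := by
    rw [hD (F * G), hD G, Finset.smul_sum, ← Finset.sum_add_distrib]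
    refine Finset.sum_congr rfl fun x _ => ?_
    simp only [tail_mul, map_add, map_smul, mul_add, mul_smul_comm, smul_add]
    abel
  have hF : F * D G = F [] • D G + ∑ x, letter x * (tail x F * D G) := by
    conv_lhs => rw [eq_smul_one_add_sum_letter_mul_tail F]
    simp only [add_mul, smul_mul_assoc, one_mul, Finset.sum_mul, mul_assoc]
  rw [hFG, hF, hD F, Finset.sum_mul]
  simp only [mul_sub, mul_add, add_mul, mul_assoc, Finset.sum_add_distrib,
    Finset.sum_sub_distrib]
  abel

theorem apply_letter_of_eq_sum
    (hD : ∀ F, D F = ∑ x, (δ x * tail x F + letter x * D (tail x F))) (x : X) :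
    D (letter x) = δ x := by
  have hD_one : D 1 = 0 :=
    map_one_of_mem_derivationLieSubalgebra (mem_derivationLieSubalgebra_of_eq_sum hD)
  rw [hD, Finset.sum_eq_single x]
  · simp [tail_letter, hD_one]
  · intro y _ hy
    simp [tail_letter, hy]
  · simp

end Derivations

section Action

variable {G X k : Type} [Group G] [MulAction G X]

/-- The action of a group on series that permutes the letters. For `Γ` acting on `Option Γ` by
multiplication, `σ • F` is `tser σ F`. -/
instance : SMul G (NCSeries X k) := ⟨fun g F w => F (w.map (g⁻¹ • ·))⟩

theorem group_smul_apply (g : G) (F : NCSeries X k) (u : List X) :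
    (g • F) u = F (u.map (g⁻¹ • ·)) := rfl

variable [CommRing k]

instance : MulSemiringAction G (NCSeries X k) where
  one_smul F := by ext u; simp [group_smul_apply]
  mul_smul g h F := by ext u; simp [group_smul_apply, mul_smul, Function.comp_def]
  smul_zero _ := rfl
  smul_add _ _ _ := rfl
  smul_one g := by ext u; cases u <;> rfl
  smul_mul g F H := by
    ext u
    simp only [group_smul_apply, mul_apply, List.length_map, List.map_take, List.map_drop]

instance : SMulCommClass G k (NCSeries X k) where
  smul_comm _ _ _ := rfl

variable [DecidableEq X]

theorem group_smul_letter (g : G) (x : X) :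
    g • (letter x : NCSeries X k) = letter (g • x) := by
  ext u
  simp [group_smul_apply, letter_apply, List.map_eq_singleton_iff, inv_smul_eq_iff]

theorem apply_group_smul [Finite X] {D : Module.End k (NCSeries X k)}
    (hD : D ∈ derivationLieSubalgebra k (NCSeries X k)) (g : G)
    (h : ∀ x, D (letter (g • x)) = g • D (letter x)) (F : NCSeries X k) :
    D (g • F) = g • D F := by
  let e : NCSeries X k ≃ₗ[k] NCSeries X k := DistribMulAction.toLinearEquiv k _ g
  have he : e.symm.conj D = D := by
    refine eq_of_forall_letter (conj_mem_derivationLieSubalgebra hD _ (smul_mul' g⁻¹)) hD ?_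
    intro x
    change g⁻¹ • D (g • letter x) = _
    rw [group_smul_letter, h, inv_smul_smul]
  rw [← inv_smul_eq_iff]
  exact LinearMap.congr_fun he F

end Action

section SpecialDerivation

variable {Γ k : Type} [CommGroup Γ] [DecidableEq Γ] [CommRing k]

/-- The value of `d_ψ` on a letter. -/
def specialLetter (ψ : NCSeries (Option Γ) k) (x : Option Γ) : NCSeries (Option Γ) k :=
  dlet ψ x

@[simp]
theorem specialLetter_none (ψ : NCSeries (Option Γ) k) : specialLetter ψ none = 0 := rfl

theorem specialLetter_some (ψ : NCSeries (Option Γ) k) (σ : Γ) :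
    specialLetter ψ (some σ) = ⁅(letter (some σ) : NCSeries (Option Γ) k), σ • ψ⁆ := rfl

@[simp]
theorem specialLetter_nil (ψ : NCSeries (Option Γ) k) (x : Option Γ) :
    specialLetter ψ x [] = 0 := by
  cases x <;> simp [specialLetter_some, Ring.lie_def]

theorem specialLetter_add (ψ φ : NCSeries (Option Γ) k) (x : Option Γ) :
    specialLetter (ψ + φ) x = specialLetter ψ x + specialLetter φ x := by
  cases x with
  | none => simp
  | some σ =>
    simp only [specialLetter_some, Ring.lie_def, smul_add, mul_add, add_mul]
    abel

theorem specialLetter_smul (ψ : NCSeries (Option Γ) k) (σ : Γ) (x : Option Γ) :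
    specialLetter ψ (σ • x) = σ • specialLetter ψ x := by
  cases x <;>
    simp [specialLetter_some, Ring.lie_def, smul_sub, group_smul_letter, mul_smul]

/-- The value of `d_ψ` on a word. -/
def specialWord (ψ : NCSeries (Option Γ) k) (w : List (Option Γ)) : NCSeries (Option Γ) k :=
  dword ψ w

theorem specialWord_eq_sum (ψ : NCSeries (Option Γ) k) (w : List (Option Γ)) :
    specialWord ψ w = ∑ i ∈ Finset.range w.length,
      word (w.take i) * (specialLetter ψ (w.getD i none) * word (w.drop (i + 1))) := by
  ext u
  rw [sum_apply]
  rfl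

theorem specialWord_nil (ψ : NCSeries (Option Γ) k) : specialWord ψ [] = 0 := rfl

theorem specialWord_cons (ψ : NCSeries (Option Γ) k) (x : Option Γ) (w : List (Option Γ)) :
    specialWord ψ (x :: w) = specialLetter ψ x * word w + letter x * specialWord ψ w := by
  rw [specialWord_eq_sum, List.length_cons, Finset.sum_range_succ', specialWord_eq_sum,
    Finset.mul_sum, add_comm]
  simp [word_nil, word_cons, mul_assoc]

variable [Fintype Γ]

/-- The special derivation `d_ψ` as a linear map. -/
def specialDerivation (ψ : NCSeries (Option Γ) k) : Module.End k (NCSeries (Option Γ) k) where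
  toFun F := dser ψ F
  map_add' F G := by
    ext u
    exact (Finset.sum_congr rfl fun w _ => add_mul (F w) (G w) _).trans Finset.sum_add_distrib
  map_smul' c F := by
    ext u
    exact (Finset.sum_congr rfl fun w _ => mul_assoc c (F w) _).trans (Finset.mul_sum _ _ _).symm

theorem specialDerivation_apply (ψ F : NCSeries (Option Γ) k) (u : List (Option Γ)) :
    specialDerivation ψ F u = ∑ w ∈ wordsLe (Option Γ) u.length, F w * specialWord ψ w u := rfl

@[simp]
theorem specialDerivation_nil (ψ F : NCSeries (Option Γ) k) : specialDerivation ψ F [] = 0 := by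
  simp [specialDerivation_apply, wordsLe_zero, specialWord_nil]

theorem specialDerivation_eq_sum (ψ F : NCSeries (Option Γ) k) :
    specialDerivation ψ F =
      ∑ x, (specialLetter ψ x * tail x F + letter x * specialDerivation ψ (tail x F)) := by
  ext u
  cases u with
  | nil => simp
  | cons y u =>
    have h_letter (x : Option Γ) :
        (letter x * specialDerivation ψ (tail x F) : NCSeries (Option Γ) k) (y :: u) =
          ∑ w ∈ wordsLe (Option Γ) u.length,
            F (x :: w) * (letter x * specialWord ψ w : NCSeries (Option Γ) k) (y :: u) := by
      simp only [letter_mul_cons]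
      split_ifs
      · rfl
      · simp
    rw [specialDerivation_apply, List.length_cons, sum_wordsLe_succ, specialWord_nil, zero_apply,
      mul_zero, zero_add, sum_apply]
    refine Finset.sum_congr rfl fun x _ => ?_
    rw [add_apply, h_letter, mul_cons_eq_sum_word (specialLetter_nil ψ x)]
    simp only [specialWord_cons, add_apply, mul_add, Finset.sum_add_distrib, tail_apply]

theorem specialDerivation_mem (ψ : NCSeries (Option Γ) k) :
    specialDerivation ψ ∈ derivationLieSubalgebra k (NCSeries (Option Γ) k) :=
  mem_derivationLieSubalgebra_of_eq_sum (specialDerivation_eq_sum ψ)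

@[simp]
theorem specialDerivation_letter (ψ : NCSeries (Option Γ) k) (x : Option Γ) :
    specialDerivation ψ (letter x) = specialLetter ψ x :=
  apply_letter_of_eq_sum (specialDerivation_eq_sum ψ) x

theorem specialDerivation_add (ψ φ : NCSeries (Option Γ) k) :
    specialDerivation (ψ + φ) = specialDerivation ψ + specialDerivation φ :=
  eq_of_forall_letter (specialDerivation_mem _)
    (add_mem (specialDerivation_mem ψ) (specialDerivation_mem φ))
    fun x => by simp [specialLetter_add]

theorem specialDerivation_smul (σ : Γ) (ψ F : NCSeries (Option Γ) k) :
    specialDerivation ψ (σ • F) = σ • specialDerivation ψ F :=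
  apply_group_smul (specialDerivation_mem ψ) σ
    (fun x => by simp only [specialDerivation_letter, specialLetter_smul]) F

end SpecialDerivation

section Ihara

variable {Γ k : Type} [CommGroup Γ] [Fintype Γ] [DecidableEq Γ] [CommRing k]

/-- The operator `s_ψ`, additive in `ψ`. -/
def tangential : NCSeries (Option Γ) k →+ Module.End k (NCSeries (Option Γ) k) :=
  AddMonoidHom.mk' (fun ψ => LinearMap.mulLeft k ψ + specialDerivation ψ) fun ψ φ => by
    ext1 F
    simp only [specialDerivation_add, LinearMap.add_apply, LinearMap.mulLeft_apply, add_mul]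
    abel

theorem tangential_eq (ψ : NCSeries (Option Γ) k) :
    tangential ψ = LinearMap.mulLeft k ψ + specialDerivation ψ := rfl

theorem tangential_apply (ψ F : NCSeries (Option Γ) k) :
    tangential ψ F = ψ * F + specialDerivation ψ F := rfl

/-- The Ihara bracket `⟨ψ₁, ψ₂⟩` on the series algebra. -/
def ihara (ψ₁ ψ₂ : NCSeries (Option Γ) k) : NCSeries (Option Γ) k :=
  tangential ψ₁ ψ₂ - tangential ψ₂ ψ₁

theorem ihara_nil (ψ₁ ψ₂ : NCSeries (Option Γ) k) : ihara ψ₁ ψ₂ [] = 0 := by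
  simp [ihara, tangential_apply, mul_comm]

theorem ihara_eq_lie_add (ψ₁ ψ₂ : NCSeries (Option Γ) k) :
    ihara ψ₁ ψ₂ = ⁅ψ₁, ψ₂⁆ + specialDerivation ψ₁ ψ₂ - specialDerivation ψ₂ ψ₁ := by
  simp only [ihara, tangential_apply, Ring.lie_def]
  abel

theorem specialDerivation_ihara (ψ₁ ψ₂ : NCSeries (Option Γ) k) :
    specialDerivation (ihara ψ₁ ψ₂) = ⁅specialDerivation ψ₁, specialDerivation ψ₂⁆ := by
  refine eq_of_forall_letter (specialDerivation_mem _)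
    (LieSubalgebra.lie_mem _ (specialDerivation_mem ψ₁) (specialDerivation_mem ψ₂)) ?_
  rintro (_ | σ)
  · simp [Ring.lie_def]
  · simp only [Ring.lie_def, LinearMap.sub_apply, Module.End.mul_apply, specialDerivation_letter,
      specialLetter_some, map_sub, specialDerivation_mem _ _ _, specialDerivation_smul,
      ihara_eq_lie_add, smul_sub, smul_add, smul_mul']
    noncomm_ring

theorem tangential_ihara (ψ₁ ψ₂ : NCSeries (Option Γ) k) :
    tangential (ihara ψ₁ ψ₂) = ⁅tangential ψ₁, tangential ψ₂⁆ := by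
  simp only [tangential_eq]
  rw [specialDerivation_ihara, ihara_eq_lie_add,
    lie_mulLeft_add (specialDerivation_mem ψ₁) (specialDerivation_mem ψ₂)]

end Ihara

end NCSeries

/-- The series in the letters `x₀` and `x_σ`, with `s_ψ(φ)` as the product of `ψ` and `φ`; the
commutator of this pre-Lie product is the Ihara bracket. -/
def TangentialSeries (Γ k : Type) : Type := NCSeries (Option Γ) k

namespace TangentialSeries

variable {Γ k : Type} [CommGroup Γ] [Fintype Γ] [DecidableEq Γ] [CommRing k]

instance : AddCommGroup (TangentialSeries Γ k) :=
  inferInstanceAs (AddCommGroup (NCSeries (Option Γ) k))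

instance : Mul (TangentialSeries Γ k) := ⟨fun ψ φ => NCSeries.tangential ψ φ⟩

instance : NonUnitalNonAssocRing (TangentialSeries Γ k) where
  left_distrib ψ := map_add (NCSeries.tangential ψ)
  right_distrib ψ φ := LinearMap.congr_fun (map_add NCSeries.tangential ψ φ)
  mul_zero ψ := map_zero (NCSeries.tangential ψ)
  zero_mul := LinearMap.congr_fun (map_zero NCSeries.tangential)

theorem commutator_mul (ψ φ F : TangentialSeries Γ k) :
    (ψ * φ - φ * ψ) * F = ψ * (φ * F) - φ * (ψ * F) :=
  LinearMap.congr_fun (NCSeries.tangential_ihara ψ φ) F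

instance : LeftPreLieRing (TangentialSeries Γ k) where
  assoc_symm' ψ φ F := by
    have h := commutator_mul ψ φ F
    rw [sub_mul] at h
    rw [associator_apply, associator_apply, sub_eq_sub_iff_sub_eq_sub, h]

end TangentialSeries

theorem sact_bracket_general {Γ k : Type} [CommGroup Γ] [Fintype Γ] [DecidableEq Γ]
    [CommRing k] :
    (∀ ψ₁ ψ₂ F : Ser (Option Γ) k, sact (ibr ψ₁ ψ₂) F =
        fun u => sact ψ₁ (sact ψ₂ F) u - sact ψ₂ (sact ψ₁ F) u) ∧
    (∀ ψ : Ser (Option Γ) k, ibr ψ ψ = 0) ∧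
    (∀ ψ₁ ψ₂ : Ser (Option Γ) k, ibr ψ₁ ψ₂ [] = 0) ∧
    (∀ ψ₁ ψ₂ ψ₃ : Ser (Option Γ) k,
      ∀ u, ibr ψ₁ (ibr ψ₂ ψ₃) u + ibr ψ₂ (ibr ψ₃ ψ₁) u + ibr ψ₃ (ibr ψ₁ ψ₂) u = 0) :=
  -- `tangential ψ F` and `ihara ψ₁ ψ₂` unfold to `sact ψ F` and `ibr ψ₁ ψ₂`.
  ⟨fun ψ₁ ψ₂ => LinearMap.congr_fun (NCSeries.tangential_ihara ψ₁ ψ₂),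
    lie_self (L := TangentialSeries Γ k),
    NCSeries.ihara_nil,
    fun ψ₁ ψ₂ ψ₃ => congr_fun (lie_jacobi (L := TangentialSeries Γ k) ψ₁ ψ₂ ψ₃)⟩

/-- The map `ψ ↦ s_ψ` satisfies `s_{⟨ψ₁,ψ₂⟩} = [s_{ψ₁}, s_{ψ₂}]` on
series with zero constant term; in particular `⟨·,·⟩` is a Lie bracket on the set of
series with zero constant term (alternating and satisfying the Jacobi identity). -/
theorem sact_bracket {Γ k : Type} [CommGroup Γ] [Fintype Γ] [DecidableEq Γ] [CommRing k] :
    (∀ ψ₁ ψ₂ : Ser (Option Γ) k, ψ₁ [] = 0 → ψ₂ [] = 0 →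
      ∀ F : Ser (Option Γ) k, sact (ibr ψ₁ ψ₂) F =
        fun u => sact ψ₁ (sact ψ₂ F) u - sact ψ₂ (sact ψ₁ F) u) ∧
    (∀ ψ : Ser (Option Γ) k, ψ [] = 0 → ibr ψ ψ = 0) ∧
    (∀ ψ₁ ψ₂ : Ser (Option Γ) k, ψ₁ [] = 0 → ψ₂ [] = 0 → ibr ψ₁ ψ₂ [] = 0) ∧
    (∀ ψ₁ ψ₂ ψ₃ : Ser (Option Γ) k, ψ₁ [] = 0 → ψ₂ [] = 0 → ψ₃ [] = 0 →
      ∀ u, ibr ψ₁ (ibr ψ₂ ψ₃) u + ibr ψ₂ (ibr ψ₃ ψ₁) u + ibr ψ₃ (ibr ψ₁ ψ₂) u = 0) := by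
  obtain ⟨h_act, h_self, h_nil, h_jacobi⟩ := sact_bracket_general (Γ := Γ) (k := k)
  exact ⟨fun ψ₁ ψ₂ _ _ => h_act ψ₁ ψ₂, fun ψ _ => h_self ψ, fun ψ₁ ψ₂ _ _ => h_nil ψ₁ ψ₂,
    fun ψ₁ ψ₂ ψ₃ _ _ _ => h_jacobi ψ₁ ψ₂ ψ₃⟩
end

section
/- With notation as in the Ihara action: for any ψ with zero constant term and any series H, Exp(ψ) ⊛ H = exp(s_ψ)(H), where G ⊛ H := G · κ_G(H), κ_G is the continuous algebra endomorphism with κ_G(x₀) = x₀ and κ_G(x_σ) = t_σ(G)^{-1} x_σ t_σ(G), s_ψ(φ) = ψφ + d_ψ(φ), and Exp is the exponential for the group law ⊛. -/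
/- Noncommutative formal power series over the alphabet X_Γ = {x₀} ∪ {x_σ : σ ∈ Γ},
modelled as coefficient functions `List (Option Γ) → k` (none = x₀, some σ = x_σ). -/

open Finset

/-- The exponential `exp(s_ψ)` of the tangential action operator, applied to a series.
Since `ψ` has zero constant term, `s_ψ` raises the weight, so the coefficient of a word
`u` in `exp(s_ψ)(H)` only involves finitely many terms of the exponential series. -/
def expS {Γ k : Type} [CommGroup Γ] [Fintype Γ] [DecidableEq Γ] [CommRing k] [Algebra ℚ k]
    (ψ H : Ser (Option Γ) k) : Ser (Option Γ) k := fun u =>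
  ∑ n ∈ Finset.range (u.length + 1),
    algebraMap ℚ k ((n.factorial : ℚ))⁻¹ * ((sact ψ)^[n] H) u

/-- Inverse of a series with constant term 1. -/
def sinv {X k : Type} [CommRing k] (G : Ser X k) : List X → k
  | [] => 1
  | a :: w => - ∑ p ∈ Finset.range (w.length + 1),
      G (a :: w.take p) * sinv G (w.drop p)
  termination_by w => w.length
  decreasing_by simp only [List.length_drop, List.length_cons]; omega

/-- The image of the letters under the endomorphism κ_G :
`κ_G(x₀) = x₀` and `κ_G(x_σ) = t_σ(G)⁻¹ x_σ t_σ(G)`. -/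
def kletter {Γ k : Type} [CommGroup Γ] [Fintype Γ] [DecidableEq Γ] [CommRing k]
    (G : Ser (Option Γ) k) : Option Γ → Ser (Option Γ) k
  | none => monom [none]
  | some σ => smul2 (sinv (tser σ G)) (smul2 (monom [some σ]) (tser σ G))

/-- Product of a list of series. -/
def wordProd {X k : Type} [CommRing k] : List (Ser X k) → Ser X k
  | [] => sone
  | F :: L => smul2 F (wordProd L)

/-- The continuous algebra endomorphism κ_G applied to a series. -/
def kappa {Γ k : Type} [CommGroup Γ] [Fintype Γ] [DecidableEq Γ] [CommRing k]
    (G F : Ser (Option Γ) k) : Ser (Option Γ) k :=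
  fun u => ∑ w ∈ wordsLe (Option Γ) u.length, F w * wordProd (w.map (kletter G)) u

/-- The twisted (Ihara) product `G ⊛ H = G · κ_G(H)`. -/
def mulMT {Γ k : Type} [CommGroup Γ] [Fintype Γ] [DecidableEq Γ] [CommRing k]
    (G H : Ser (Option Γ) k) : Ser (Option Γ) k :=
  smul2 G (kappa G H)

/-! Twisted Leibniz rules exponentiate. Since `d_ψ` is a derivation,
`s_ψ(F K) = s_ψ(F) K + F d_ψ(K)`, hence `exp(s_ψ)(F K) = exp(s_ψ)(F) · exp(d_ψ)(K)`; with `F = 1`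
this reads `exp(s_ψ)(H) = Exp(ψ) · exp(d_ψ)(H)`. Likewise `exp(d_ψ)` is multiplicative, so that
`exp(d_ψ) = κ_{Exp(ψ)}` only has to be checked on letters. For `x_σ`, consider the operator
`s(F) = t_σ(ψ) F + d_ψ(F)`. It commutes with left multiplication by `x_σ`, because
`d_ψ(x_σ) = [x_σ, t_σ(ψ)]`, and `exp(s)(1) = t_σ(Exp(ψ))`, because `d_ψ` is `Γ`-equivariant.
Computing `exp(s)(x_σ)` in two ways gives `t_σ(Exp(ψ)) · exp(d_ψ)(x_σ) = x_σ · t_σ(Exp(ψ))`. -/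

namespace Ser

local infixl:70 " ⋆ " => smul2

section Product

variable {X k : Type} [CommRing k]

/-- The left derivative `∂_a F` of a series, characterised by `F = F [] + ∑ a, x_a · ∂_a F`;
it makes identities between products accessible to induction on words. -/
def leftDeriv (a : X) (F : Ser X k) : Ser X k := fun w => F (a :: w)

theorem smul2_nil (F G : Ser X k) : (F ⋆ G) [] = F [] * G [] := by
  simp [smul2]

theorem smul2_cons (F G : Ser X k) (a : X) (w : List X) :
    (F ⋆ G) (a :: w) = F [] * G (a :: w) + (leftDeriv a F ⋆ G) w := by
  rw [smul2, List.length_cons, Finset.sum_range_succ', add_comm]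
  rfl

/-- The product of series as a bilinear map. -/
def mulBilin : Ser X k →ₗ[k] Ser X k →ₗ[k] Ser X k :=
  LinearMap.mk₂ k smul2
    (fun F F' G => funext fun w => by simp [smul2, add_mul, Finset.sum_add_distrib])
    (fun c F G => funext fun w => by simp [smul2, Finset.mul_sum, mul_assoc])
    (fun F G G' => funext fun w => by simp [smul2, mul_add, Finset.sum_add_distrib])
    (fun c F G => funext fun w => by simp [smul2, Finset.mul_sum, mul_left_comm])

@[simp]
theorem mulBilin_apply (F G : Ser X k) : mulBilin F G = F ⋆ G := rfl

theorem add_smul2 (F F' G : Ser X k) : (F + F') ⋆ G = F ⋆ G + F' ⋆ G :=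
  LinearMap.map_add₂ mulBilin F F' G

theorem sub_smul2 (F F' G : Ser X k) : (F - F') ⋆ G = F ⋆ G - F' ⋆ G :=
  LinearMap.map_sub₂ mulBilin F F' G

theorem smul_smul2 (c : k) (F G : Ser X k) : (c • F) ⋆ G = c • (F ⋆ G) :=
  LinearMap.map_smul₂ mulBilin c F G

theorem zero_smul2 (G : Ser X k) : 0 ⋆ G = 0 :=
  LinearMap.map_zero₂ mulBilin G

theorem smul2_add (F G G' : Ser X k) : F ⋆ (G + G') = F ⋆ G + F ⋆ G' :=
  map_add (mulBilin F) G G'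

theorem smul2_zero (F : Ser X k) : F ⋆ 0 = 0 :=
  map_zero (mulBilin F)

theorem leftDeriv_smul2 (a : X) (F G : Ser X k) :
    leftDeriv a (F ⋆ G) = F [] • leftDeriv a G + leftDeriv a F ⋆ G :=
  funext fun w => smul2_cons F G a w

theorem smul2_assoc (F G K : Ser X k) : F ⋆ G ⋆ K = F ⋆ (G ⋆ K) := by
  funext w
  induction w generalizing F G with
  | nil => simp only [smul2_nil, mul_assoc]
  | cons a w ih =>
    calc (F ⋆ G ⋆ K) (a :: w)
        = F [] * G [] * K (a :: w) + (F [] * (leftDeriv a G ⋆ K) w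
            + (leftDeriv a F ⋆ G ⋆ K) w) := by
          rw [smul2_cons, leftDeriv_smul2, add_smul2, smul_smul2, smul2_nil]
          rfl
      _ = F [] * (G [] * K (a :: w) + (leftDeriv a G ⋆ K) w)
            + (leftDeriv a F ⋆ (G ⋆ K)) w := by
          rw [ih]
          ring
      _ = (F ⋆ (G ⋆ K)) (a :: w) := by rw [smul2_cons F, smul2_cons G]

theorem sone_smul2 (F : Ser X k) : sone ⋆ F = F := by
  funext w
  cases w with
  | nil => simp [smul2_nil, sone]
  | cons a w =>
    have hderiv : leftDeriv a (sone : Ser X k) = 0 := rfl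
    simp [smul2_cons, hderiv, zero_smul2, sone]

theorem smul2_sone (F : Ser X k) : F ⋆ sone = F := by
  funext w
  induction w generalizing F with
  | nil => simp [smul2_nil, sone]
  | cons a w ih => simp [smul2_cons, ih, leftDeriv, sone]

theorem smul2_sinv {G : Ser X k} (hG : G [] = 1) : G ⋆ sinv G = sone := by
  funext w
  cases w with
  | nil => simp [smul2_nil, sone, hG, sinv]
  | cons a w =>
    rw [smul2_cons, hG, one_mul, sinv]
    exact neg_add_cancel _

theorem sinv_smul2 {G : Ser X k} (hG : G [] = 1) : sinv G ⋆ G = sone := by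
  have hinv : sinv G [] = 1 := by rw [sinv]
  have hinvinv : G = sinv (sinv G) :=
    calc G = G ⋆ (sinv G ⋆ sinv (sinv G)) := by rw [smul2_sinv hinv, smul2_sone]
      _ = sinv (sinv G) := by rw [← smul2_assoc, smul2_sinv hG, sone_smul2]
  calc sinv G ⋆ G = sinv G ⋆ sinv (sinv G) := congrArg _ hinvinv
    _ = sone := smul2_sinv hinv

theorem eq_sinv_smul2_of_smul2_eq {G F K : Ser X k} (hG : G [] = 1) (h : G ⋆ F = K) :
    F = sinv G ⋆ K := by
  rw [← h, ← smul2_assoc, sinv_smul2 hG, sone_smul2]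

end Product

section Weight

variable {X k : Type} [CommRing k]

/-- The weight filtration: series whose coefficients on words of length `< n` vanish. -/
def weightGE (n : ℕ) : Submodule k (Ser X k) where
  carrier := {F | ∀ w, w.length < n → F w = 0}
  add_mem' hF hG w hw := by simp [hF w hw, hG w hw]
  zero_mem' _ _ := rfl
  smul_mem' c F hF w hw := by simp [hF w hw]

theorem mem_weightGE_zero (F : Ser X k) : F ∈ weightGE 0 :=
  fun _ hw => absurd hw (Nat.not_lt_zero _)

theorem mem_weightGE_one {F : Ser X k} (hF : F [] = 0) : F ∈ weightGE 1 := by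
  intro w hw
  rwa [List.length_eq_zero_iff.mp (Nat.lt_one_iff.mp hw)]

theorem weightGE_antitone : Antitone (weightGE : ℕ → Submodule k (Ser X k)) :=
  fun _ _ hmn _ hF w hw => hF w (hw.trans_le hmn)

theorem smul2_mem_weightGE {m n : ℕ} {F G : Ser X k} (hF : F ∈ weightGE m)
    (hG : G ∈ weightGE n) : F ⋆ G ∈ weightGE (m + n) := by
  intro w hw
  refine Finset.sum_eq_zero fun p _ => ?_
  by_cases hp : (w.take p).length < m
  · rw [hF _ hp, zero_mul]
  · rw [hG _ ?_, mul_zero]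
    simp only [List.length_take, List.length_drop] at hp ⊢
    omega

/-- The constant terms, being central, do not contribute to a commutator. -/
theorem commutator_mem_weightGE_two (F G : Ser X k) : F ⋆ G - G ⋆ F ∈ weightGE 2 := by
  intro w hw
  match w with
  | [] => simp [smul2_nil, mul_comm]
  | [a] =>
    simp only [Pi.sub_apply, smul2_cons, smul2_nil, leftDeriv]
    ring
  | _ :: _ :: _ => simp at hw

/-- `T` raises the weight by at least `d`. The case `d = 0` plays the role of continuity for the
weight filtration. -/
def RaisesWeight (d : ℕ) (T : Ser X k →ₗ[k] Ser X k) : Prop :=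
  ∀ ⦃n F⦄, F ∈ weightGE n → T F ∈ weightGE (n + d)

variable {d e : ℕ} {S T : Ser X k →ₗ[k] Ser X k}

theorem RaisesWeight.mono (hT : RaisesWeight d T) (hed : e ≤ d) : RaisesWeight e T :=
  fun _ _ hF => weightGE_antitone (Nat.add_le_add_left hed _) (hT hF)

theorem RaisesWeight.add (hS : RaisesWeight d S) (hT : RaisesWeight d T) :
    RaisesWeight d (S + T) :=
  fun _ _ hF => add_mem (hS hF) (hT hF)

theorem RaisesWeight.comp (hS : RaisesWeight d S) (hT : RaisesWeight e T) :
    RaisesWeight (e + d) (S ∘ₗ T) :=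
  fun n _ hF => (Nat.add_assoc n e d) ▸ hS (hT hF)

theorem RaisesWeight.pow (hT : RaisesWeight d T) (n : ℕ) : RaisesWeight (n * d) (T ^ n) := by
  induction n with
  | zero =>
    intro m F hF
    simpa using hF
  | succ n ih =>
    rw [pow_succ', Nat.succ_mul]
    exact hT.comp ih

theorem RaisesWeight.pow_apply_eq_zero (hT : RaisesWeight 1 T) (F : Ser X k) {u : List X}
    {n : ℕ} (hn : u.length < n) : (T ^ n) F u = 0 :=
  hT.pow n (mem_weightGE_zero F) u (by omega)

theorem raisesWeight_mulBilin {F : Ser X k} (hF : F ∈ weightGE d) :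
    RaisesWeight d (mulBilin F) :=
  fun n _ hG => Nat.add_comm d n ▸ smul2_mem_weightGE hF hG

theorem raisesWeight_mulBilin_flip {F : Ser X k} (hF : F ∈ weightGE d) :
    RaisesWeight d (mulBilin.flip F) :=
  fun _ _ hG => smul2_mem_weightGE hG hF

end Weight

section Words

variable {X k : Type} [CommRing k] [DecidableEq X]

theorem monom_nil : (monom [] : Ser X k) = sone := by
  funext w
  cases w <;> simp [monom, sone]

theorem leftDeriv_monom_cons (a b : X) (v : List X) :
    leftDeriv b (monom (a :: v) : Ser X k) = if b = a then monom v else 0 := by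
  funext w
  by_cases hba : b = a <;> simp [leftDeriv, monom, hba]

theorem monom_smul2_monom (v w : List X) :
    monom v ⋆ monom w = (monom (v ++ w) : Ser X k) := by
  funext u
  induction v generalizing u with
  | nil => rw [monom_nil, sone_smul2, List.nil_append]
  | cons a v ih =>
    cases u with
    | nil => simp [smul2_nil, monom]
    | cons b u =>
      rw [smul2_cons, leftDeriv_monom_cons]
      by_cases hba : b = a
      · rw [if_pos hba, ih]
        simp [monom, hba]
      · rw [if_neg hba, zero_smul2]
        simp [monom, hba]

theorem monom_mem_weightGE (v : List X) : (monom v : Ser X k) ∈ weightGE v.length := by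
  intro w hw
  rw [monom, if_neg]
  rintro rfl
  exact lt_irrefl _ hw

section Fintype

variable [Fintype X]

theorem mem_wordsLe {L : ℕ} {w : List X} : w ∈ wordsLe X L ↔ w.length ≤ L := by
  simp only [wordsLe, Finset.mem_biUnion, Finset.mem_range, Finset.mem_image,
    Fintype.mem_piFinset, Finset.mem_univ, implies_true, true_and]
  constructor
  · rintro ⟨n, hn, f, rfl⟩
    rw [List.length_ofFn]
    omega
  · intro hw
    exact ⟨w.length, by omega, w.get, List.ofFn_get w⟩

/-- The continuous linear extension of a map `f` defined on words. It has the expected values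
`f w` on words only when `f w` has weight at least `w.length`, since the sum is truncated. -/
def liftWords (f : List X → Ser X k) : Ser X k →ₗ[k] Ser X k :=
  LinearMap.pi fun u => ∑ w ∈ wordsLe X u.length, (LinearMap.proj w).smulRight (f w u)

theorem liftWords_apply (f : List X → Ser X k) (F : Ser X k) (u : List X) :
    liftWords f F u = ∑ w ∈ wordsLe X u.length, F w * f w u := by
  simp [liftWords]

theorem raisesWeight_liftWords {d : ℕ} {f : List X → Ser X k}
    (hf : ∀ w, f w ∈ weightGE (w.length + d)) : RaisesWeight d (liftWords f) := by
  intro n F hF u hu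
  rw [liftWords_apply]
  refine Finset.sum_eq_zero fun w _ => ?_
  by_cases hw : w.length < n
  · rw [hF w hw, zero_mul]
  · rw [hf w u (by omega), mul_zero]

theorem liftWords_monom {f : List X → Ser X k} (hf : ∀ w, f w ∈ weightGE w.length)
    (w : List X) : liftWords f (monom w) = f w := by
  funext u
  rw [liftWords_apply, Finset.sum_eq_single w]
  · simp [monom]
  · intro v _ hvw
    simp [monom, hvw]
  · intro hw
    rw [mem_wordsLe, not_le] at hw
    rw [hf w u hw, mul_zero]

theorem RaisesWeight.eq_liftWords {T : Ser X k →ₗ[k] Ser X k} (hT : RaisesWeight 0 T) :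
    T = liftWords fun w => T (monom w) := by
  refine LinearMap.ext fun F => funext fun u => ?_
  have htail : F - ∑ w ∈ wordsLe X u.length, F w • monom w ∈ weightGE (u.length + 1) := by
    intro v hv
    simp [monom, Finset.sum_apply, mem_wordsLe.mpr (Nat.lt_succ_iff.mp hv)]
  have hT_tail := hT htail u (Nat.lt_succ_self _)
  rw [map_sub, Pi.sub_apply, sub_eq_zero] at hT_tail
  simp [hT_tail, liftWords_apply, Finset.sum_apply]

end Fintype

variable [Finite X]

theorem RaisesWeight.ext_monom {S T : Ser X k →ₗ[k] Ser X k} (hS : RaisesWeight 0 S)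
    (hT : RaisesWeight 0 T) (h : ∀ w, S (monom w) = T (monom w)) : S = T := by
  cases nonempty_fintype X
  rw [hS.eq_liftWords, hT.eq_liftWords]
  simp only [h]

theorem RaisesWeight.leibniz_of_monom {D : Ser X k →ₗ[k] Ser X k} (hD : RaisesWeight 0 D)
    (h : ∀ v w, D (monom (v ++ w)) = D (monom v) ⋆ monom w + monom v ⋆ D (monom w))
    (F G : Ser X k) : D (F ⋆ G) = D F ⋆ G + F ⋆ D G := by
  have left (F : Ser X k) : RaisesWeight 0 (mulBilin F) :=
    raisesWeight_mulBilin (mem_weightGE_zero F)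
  have right (G : Ser X k) : RaisesWeight 0 (mulBilin.flip G) :=
    raisesWeight_mulBilin_flip (mem_weightGE_zero G)
  have hword (v : List X) :
      D ∘ₗ mulBilin (monom v) = mulBilin (D (monom v)) + mulBilin (monom v) ∘ₗ D :=
    (hD.comp (left _)).ext_monom ((left _).add ((left _).comp hD)) fun w => by
      simp [monom_smul2_monom, h]
  have hseries : D ∘ₗ mulBilin.flip G = mulBilin.flip G ∘ₗ D + mulBilin.flip (D G) :=
    (hD.comp (right _)).ext_monom (((right _).comp hD).add (right _)) fun v =>
      LinearMap.congr_fun (hword v) G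
  exact LinearMap.congr_fun hseries F

end Words

section Exponential

open Polynomial

variable {X k : Type} [CommRing k]

theorem pow_apply_smul2 {T D : Ser X k →ₗ[k] Ser X k}
    (h : ∀ F G, T (F ⋆ G) = T F ⋆ G + F ⋆ D G) (n : ℕ) (F G : Ser X k) :
    (T ^ n) (F ⋆ G) = ∑ ij ∈ Finset.HasAntidiagonal.antidiagonal n,
      n.choose ij.1 • ((T ^ ij.1) F ⋆ (D ^ ij.2) G) := by
  let μ := TensorProduct.lift (mulBilin (X := X) (k := k))
  have hμ : T ∘ₗ μ = μ ∘ₗ (T.rTensor _ + D.lTensor _) :=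
    TensorProduct.ext' fun F G => by simp [μ, h]
  have hcomm : Commute (T.rTensor (Ser X k)) (D.lTensor (Ser X k)) :=
    TensorProduct.ext' fun F G => by simp
  have hpow := LinearMap.congr_fun (Module.End.commute_pow_left_of_commute hμ n)
    (TensorProduct.tmul k F G)
  simpa [-nsmul_eq_mul, hcomm.add_pow', μ, LinearMap.sum_apply] using hpow

variable [Algebra ℚ k]

/-- The exponential of an operator, truncated as in `expS`: it is the sum of the full exponential
series only when `T` raises the weight by at least one. -/
def expOp (T : Ser X k →ₗ[k] Ser X k) : Ser X k →ₗ[k] Ser X k :=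
  LinearMap.pi fun u => ∑ n ∈ Finset.range (u.length + 1),
    algebraMap ℚ k (n.factorial : ℚ)⁻¹ • (LinearMap.proj u ∘ₗ T ^ n)

theorem expOp_apply (T : Ser X k →ₗ[k] Ser X k) (F : Ser X k) (u : List X) :
    expOp T F u = ∑ n ∈ Finset.range (u.length + 1),
      algebraMap ℚ k (n.factorial : ℚ)⁻¹ * (T ^ n) F u := by
  simp only [expOp, LinearMap.pi_apply, LinearMap.sum_apply, LinearMap.smul_apply,
    LinearMap.comp_apply, LinearMap.proj_apply, smul_eq_mul]

theorem expOp_of_apply_eq_zero {T : Ser X k →ₗ[k] Ser X k} {F : Ser X k} (hF : T F = 0) :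
    expOp T F = F := by
  funext u
  rw [expOp_apply, Finset.sum_range_succ', Finset.sum_eq_zero]
  · simp
  · intro n _
    rw [pow_succ, Module.End.mul_apply, hF, map_zero, Pi.zero_apply, mul_zero]

theorem expOp_apply_nil (T : Ser X k →ₗ[k] Ser X k) (F : Ser X k) : expOp T F [] = F [] := by
  simp [expOp_apply]

variable {A S T D : Ser X k →ₗ[k] Ser X k}

theorem RaisesWeight.expOp_sub_sum_mem_weightGE (hT : RaisesWeight 1 T) (F : Ser X k) (N : ℕ) :
    expOp T F - ∑ n ∈ Finset.range N, algebraMap ℚ k (n.factorial : ℚ)⁻¹ • (T ^ n) F ∈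
      weightGE N := by
  intro u hu
  rw [Pi.sub_apply, expOp_apply, sub_eq_zero, Finset.sum_apply]
  refine Finset.sum_subset (Finset.range_subset_range.mpr hu) fun n _ hn => ?_
  rw [hT.pow_apply_eq_zero F (by simpa using hn), mul_zero]

theorem raisesWeight_expOp (hT : RaisesWeight 1 T) : RaisesWeight 0 (expOp T) := by
  intro m F hF u hu
  rw [expOp_apply]
  refine Finset.sum_eq_zero fun n _ => ?_
  rw [hT.pow n hF u (by omega), mul_zero]

theorem RaisesWeight.map_expOp_of_semiconjBy (hA : RaisesWeight 0 A) (hT : RaisesWeight 1 T)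
    (h : SemiconjBy A T S) (F : Ser X k) : A (expOp T F) = expOp S (A F) := by
  funext u
  have hpow (n : ℕ) : A ((T ^ n) F) = (S ^ n) (A F) :=
    LinearMap.congr_fun (h.pow_right n).eq F
  have htail := hA (hT.expOp_sub_sum_mem_weightGE F (u.length + 1)) u (Nat.lt_succ_self _)
  rw [map_sub, Pi.sub_apply, sub_eq_zero] at htail
  rw [htail, expOp_apply]
  simp only [map_sum, map_smul, hpow, Finset.sum_apply, Pi.smul_apply, smul_eq_mul]

/-- The coefficient of the word `u` in `exp(tT)(F)`, a polynomial in the formal variable `t`. It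
turns the product of two exponentials into a product of polynomials. -/
noncomputable def expPoly (T : Ser X k →ₗ[k] Ser X k) (F : Ser X k) (u : List X) : k[X] :=
  ∑ n ∈ Finset.range (u.length + 1),
    monomial n (algebraMap ℚ k (n.factorial : ℚ)⁻¹ * (T ^ n) F u)

theorem eval_one_expPoly (T : Ser X k →ₗ[k] Ser X k) (F : Ser X k) (u : List X) :
    (expPoly T F u).eval 1 = expOp T F u := by
  simp [expPoly, expOp_apply, eval_finsetSum]

theorem RaisesWeight.coeff_expPoly (hT : RaisesWeight 1 T) (F : Ser X k) (u : List X) (n : ℕ) :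
    (expPoly T F u).coeff n = algebraMap ℚ k (n.factorial : ℚ)⁻¹ * (T ^ n) F u := by
  simp only [expPoly, finsetSum_coeff, coeff_monomial, Finset.sum_ite_eq', Finset.mem_range]
  split_ifs with hn
  · rfl
  · rw [hT.pow_apply_eq_zero F (by omega), mul_zero]

variable (k) in
theorem algebraMap_inv_factorial_mul_choose {i j n : ℕ} (hij : i + j = n) :
    algebraMap ℚ k (n.factorial : ℚ)⁻¹ * (n.choose i : k) =
      algebraMap ℚ k (i.factorial : ℚ)⁻¹ * algebraMap ℚ k (j.factorial : ℚ)⁻¹ := by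
  subst hij
  rw [← map_natCast (algebraMap ℚ k), ← map_mul, ← map_mul, Nat.cast_add_choose]
  congr 1
  field_simp [(i + j).factorial_ne_zero]

theorem expPoly_smul2 (hT : RaisesWeight 1 T) (hD : RaisesWeight 1 D)
    (h : ∀ F G, T (F ⋆ G) = T F ⋆ G + F ⋆ D G) (F G : Ser X k) (u : List X) :
    expPoly T (F ⋆ G) u =
      ∑ p ∈ Finset.range (u.length + 1), expPoly T F (u.take p) * expPoly D G (u.drop p) := by
  ext n
  simp only [finsetSum_coeff, coeff_mul, hT.coeff_expPoly, hD.coeff_expPoly]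
  rw [pow_apply_smul2 h, Finset.sum_apply, Finset.mul_sum, Finset.sum_comm]
  refine Finset.sum_congr rfl fun ij hij => ?_
  rw [Pi.smul_apply, nsmul_eq_mul, ← mul_assoc,
    algebraMap_inv_factorial_mul_choose k (Finset.HasAntidiagonal.mem_antidiagonal.mp hij),
    smul2, Finset.mul_sum]
  exact Finset.sum_congr rfl fun p _ => mul_mul_mul_comm _ _ _ _

theorem expOp_smul2 (hT : RaisesWeight 1 T) (hD : RaisesWeight 1 D)
    (h : ∀ F G, T (F ⋆ G) = T F ⋆ G + F ⋆ D G) (F G : Ser X k) :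
    expOp T (F ⋆ G) = expOp T F ⋆ expOp D G := by
  funext u
  rw [← eval_one_expPoly, expPoly_smul2 hT hD h, eval_finsetSum]
  simp only [eval_mul, eval_one_expPoly, smul2]

end Exponential

section Twist

variable {Γ k : Type} [CommGroup Γ] [CommRing k]

/-- The action of `t_σ` on series as a linear map. -/
def tserLinear (σ : Γ) : Ser (Option Γ) k →ₗ[k] Ser (Option Γ) k where
  toFun := tser σ
  map_add' _ _ := rfl
  map_smul' _ _ := rfl

@[simp]
theorem tserLinear_apply (σ : Γ) (F : Ser (Option Γ) k) : tserLinear σ F = tser σ F := rfl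

theorem raisesWeight_tserLinear (σ : Γ) :
    RaisesWeight 0 (tserLinear σ : Ser (Option Γ) k →ₗ[k] Ser (Option Γ) k) :=
  fun _ _ hF w hw => hF _ (by simpa using hw)

theorem tser_sone (σ : Γ) : tser σ (sone : Ser (Option Γ) k) = sone := by
  funext w
  cases w <;> rfl

theorem tser_smul2 (σ : Γ) (F G : Ser (Option Γ) k) : tser σ (F ⋆ G) = tser σ F ⋆ tser σ G := by
  funext w
  simp [tser, smul2, List.map_take, List.map_drop]

theorem tser_tser (σ τ : Γ) (F : Ser (Option Γ) k) : tser σ (tser τ F) = tser (σ * τ) F := by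
  funext w
  simp [tser, List.map_map, Function.comp_def, mul_assoc]

theorem tser_monom [DecidableEq Γ] (σ : Γ) (v : List (Option Γ)) :
    tser σ (monom v : Ser (Option Γ) k) = monom (v.map (Option.map (σ * ·))) := by
  funext w
  have hw : w.map (Option.map (σ⁻¹ * ·)) = v ↔ w = v.map (Option.map (σ * ·)) := by
    constructor <;> rintro rfl <;> simp [Function.comp_def]
  simp only [tser, monom, hw]

end Twist

section Derivation

variable {Γ k : Type} [CommGroup Γ] [DecidableEq Γ] [CommRing k]

theorem dlet_some (ψ : Ser (Option Γ) k) (σ : Γ) :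
    dlet ψ (some σ) = monom [some σ] ⋆ tser σ ψ - tser σ ψ ⋆ monom [some σ] :=
  rfl

theorem dlet_mem_weightGE (ψ : Ser (Option Γ) k) (a : Option Γ) : dlet ψ a ∈ weightGE 2 := by
  cases a with
  | none => exact zero_mem _
  | some σ => exact commutator_mem_weightGE_two _ _

theorem tser_dlet (σ : Γ) (ψ : Ser (Option Γ) k) (a : Option Γ) :
    tser σ (dlet ψ a) = dlet ψ (a.map (σ * ·)) := by
  cases a with
  | none => rfl
  | some τ =>
    rw [dlet_some, ← tserLinear_apply, map_sub]
    simp only [tserLinear_apply, tser_smul2, tser_tser, tser_monom]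
    rfl

theorem dword_nil (ψ : Ser (Option Γ) k) : dword ψ [] = 0 := by
  funext u
  simp [dword]

theorem dword_cons (ψ : Ser (Option Γ) k) (a : Option Γ) (w : List (Option Γ)) :
    dword ψ (a :: w) = dlet ψ a ⋆ monom w + monom [a] ⋆ dword ψ w := by
  have hsum (v : List (Option Γ)) : dword ψ v = ∑ i ∈ Finset.range v.length,
      monom (v.take i) ⋆ (dlet ψ (v.getD i none) ⋆ monom (v.drop (i + 1))) := by
    funext u
    simp [dword, Finset.sum_apply]
  rw [hsum, hsum w, ← mulBilin_apply (monom [a]), map_sum, List.length_cons,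
    Finset.sum_range_succ', add_comm]
  simp [monom_nil, sone_smul2, ← smul2_assoc, monom_smul2_monom]

theorem dword_singleton (ψ : Ser (Option Γ) k) (a : Option Γ) : dword ψ [a] = dlet ψ a := by
  rw [dword_cons, dword_nil, smul2_zero, add_zero, monom_nil, smul2_sone]

theorem dword_append (ψ : Ser (Option Γ) k) (v w : List (Option Γ)) :
    dword ψ (v ++ w) = dword ψ v ⋆ monom w + monom v ⋆ dword ψ w := by
  induction v with
  | nil => rw [List.nil_append, dword_nil, zero_smul2, monom_nil, sone_smul2, zero_add]
  | cons a v ih =>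
    calc dword ψ (a :: v ++ w)
        = dlet ψ a ⋆ monom (v ++ w) + monom [a] ⋆ (dword ψ v ⋆ monom w + monom v ⋆ dword ψ w) := by
          rw [List.cons_append, dword_cons, ih]
      _ = (dlet ψ a ⋆ monom v + monom [a] ⋆ dword ψ v) ⋆ monom w
            + monom [a] ⋆ monom v ⋆ dword ψ w := by
          rw [← monom_smul2_monom, smul2_add, add_smul2]
          simp only [smul2_assoc, add_assoc]
      _ = dword ψ (a :: v) ⋆ monom w + monom (a :: v) ⋆ dword ψ w := by
          rw [← dword_cons, monom_smul2_monom, List.singleton_append]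

theorem dword_mem_weightGE (ψ : Ser (Option Γ) k) (w : List (Option Γ)) :
    dword ψ w ∈ weightGE (w.length + 1) := by
  induction w with
  | nil =>
    rw [dword_nil]
    exact zero_mem _
  | cons a w ih =>
    rw [dword_cons]
    refine add_mem
      (weightGE_antitone ?_ (smul2_mem_weightGE (dlet_mem_weightGE ψ a) (monom_mem_weightGE w)))
      (weightGE_antitone ?_ (smul2_mem_weightGE (monom_mem_weightGE [a]) ih))
    all_goals simp only [List.length_cons, List.length_nil]; omega

theorem tser_dword (σ : Γ) (ψ : Ser (Option Γ) k) (w : List (Option Γ)) :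
    tser σ (dword ψ w) = dword ψ (w.map (Option.map (σ * ·))) := by
  induction w with
  | nil =>
    rw [List.map_nil, dword_nil]
    rfl
  | cons a w ih =>
    rw [List.map_cons, dword_cons, dword_cons, ← tserLinear_apply, map_add]
    simp only [tserLinear_apply, tser_smul2, tser_dlet, ih, tser_monom, List.map_cons,
      List.map_nil]

variable [Fintype Γ]

/-- The special derivation `d_ψ` as a linear map. -/
def dserLinear (ψ : Ser (Option Γ) k) : Ser (Option Γ) k →ₗ[k] Ser (Option Γ) k :=
  liftWords (dword ψ)

theorem dserLinear_apply (ψ F : Ser (Option Γ) k) : dserLinear ψ F = dser ψ F :=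
  funext fun u => liftWords_apply (dword ψ) F u

theorem raisesWeight_dserLinear (ψ : Ser (Option Γ) k) : RaisesWeight 1 (dserLinear ψ) :=
  raisesWeight_liftWords (dword_mem_weightGE ψ)

theorem dserLinear_monom (ψ : Ser (Option Γ) k) (w : List (Option Γ)) :
    dserLinear ψ (monom w) = dword ψ w :=
  liftWords_monom (fun w => weightGE_antitone w.length.le_succ (dword_mem_weightGE ψ w)) w

theorem dserLinear_sone (ψ : Ser (Option Γ) k) : dserLinear ψ sone = 0 := by
  rw [← monom_nil, dserLinear_monom, dword_nil]

theorem dserLinear_smul2 (ψ F G : Ser (Option Γ) k) :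
    dserLinear ψ (F ⋆ G) = dserLinear ψ F ⋆ G + F ⋆ dserLinear ψ G :=
  ((raisesWeight_dserLinear ψ).mono zero_le_one).leibniz_of_monom
    (fun v w => by simp only [dserLinear_monom, dword_append]) F G

theorem tser_dserLinear (σ : Γ) (ψ F : Ser (Option Γ) k) :
    tser σ (dserLinear ψ F) = dserLinear ψ (tser σ F) := by
  have hd := (raisesWeight_dserLinear ψ).mono zero_le_one
  have ht := raisesWeight_tserLinear (k := k) σ
  have hcomm : tserLinear σ ∘ₗ dserLinear ψ = dserLinear ψ ∘ₗ tserLinear σ :=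
    (ht.comp hd).ext_monom (hd.comp ht) fun w => by
      simp [dserLinear_monom, tser_monom, tser_dword]
  exact LinearMap.congr_fun hcomm F

/-- The operator `F ↦ φ F + d_ψ(F)`. For `φ = ψ` it is `s_ψ`; for `φ = t_σ(ψ)` it commutes with
left multiplication by `x_σ`. -/
def twistedAct (φ ψ : Ser (Option Γ) k) : Ser (Option Γ) k →ₗ[k] Ser (Option Γ) k :=
  mulBilin φ + dserLinear ψ

theorem twistedAct_apply (φ ψ F : Ser (Option Γ) k) :
    twistedAct φ ψ F = φ ⋆ F + dserLinear ψ F := rfl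

theorem twistedAct_self_apply (ψ F : Ser (Option Γ) k) : twistedAct ψ ψ F = sact ψ F := by
  rw [twistedAct_apply, dserLinear_apply]
  rfl

theorem raisesWeight_twistedAct {φ : Ser (Option Γ) k} (hφ : φ [] = 0) (ψ : Ser (Option Γ) k) :
    RaisesWeight 1 (twistedAct φ ψ) :=
  (raisesWeight_mulBilin (mem_weightGE_one hφ)).add (raisesWeight_dserLinear ψ)

theorem twistedAct_smul2 (φ ψ F G : Ser (Option Γ) k) :
    twistedAct φ ψ (F ⋆ G) = twistedAct φ ψ F ⋆ G + F ⋆ dserLinear ψ G := by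
  rw [twistedAct_apply, twistedAct_apply, dserLinear_smul2, add_smul2, smul2_assoc, add_assoc]

theorem semiconjBy_tserLinear_twistedAct (σ : Γ) (φ ψ : Ser (Option Γ) k) :
    SemiconjBy (tserLinear σ) (twistedAct φ ψ) (twistedAct (tser σ φ) ψ) :=
  LinearMap.ext fun F => by
    simp only [Module.End.mul_apply, tserLinear_apply, twistedAct_apply]
    rw [← tser_smul2, ← tser_dserLinear]
    rfl

theorem commute_mulBilin_letter_twistedAct (σ : Γ) (ψ : Ser (Option Γ) k) :
    Commute (mulBilin (monom [some σ])) (twistedAct (tser σ ψ) ψ) := by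
  refine LinearMap.ext fun F => ?_
  simp only [Module.End.mul_apply, mulBilin_apply, twistedAct_apply]
  rw [dserLinear_smul2, dserLinear_monom, dword_singleton, dlet_some, sub_smul2, smul2_add,
    smul2_assoc, smul2_assoc]
  abel

end Derivation

section IharaExponential

variable {Γ k : Type} [CommGroup Γ] [Fintype Γ] [DecidableEq Γ] [CommRing k] [Algebra ℚ k]
  {ψ : Ser (Option Γ) k}

theorem expS_eq_expOp (ψ H : Ser (Option Γ) k) : expS ψ H = expOp (twistedAct ψ ψ) H := by
  have hsact : ⇑(twistedAct ψ ψ) = sact ψ := funext (twistedAct_self_apply ψ)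
  funext u
  simp only [expOp_apply, Module.End.pow_apply, hsact, expS]

theorem expS_eq_smul2 (hψ : ψ [] = 0) (H : Ser (Option Γ) k) :
    expS ψ H = expS ψ sone ⋆ expOp (dserLinear ψ) H := by
  rw [expS_eq_expOp, expS_eq_expOp, ← expOp_smul2 (raisesWeight_twistedAct hψ ψ)
    (raisesWeight_dserLinear ψ) (twistedAct_smul2 ψ ψ), sone_smul2]

theorem tser_expS_sone (hψ : ψ [] = 0) (σ : Γ) :
    tser σ (expS ψ sone) = expOp (twistedAct (tser σ ψ) ψ) sone := by
  rw [expS_eq_expOp, ← tserLinear_apply, (raisesWeight_tserLinear σ).map_expOp_of_semiconjBy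
    (raisesWeight_twistedAct hψ ψ) (semiconjBy_tserLinear_twistedAct σ ψ ψ), tserLinear_apply,
    tser_sone]

theorem tser_expS_smul2_expOp_letter (hψ : ψ [] = 0) (σ : Γ) :
    tser σ (expS ψ sone) ⋆ expOp (dserLinear ψ) (monom [some σ]) =
      monom [some σ] ⋆ tser σ (expS ψ sone) := by
  have hs : RaisesWeight 1 (twistedAct (tser σ ψ) ψ) :=
    raisesWeight_twistedAct (φ := tser σ ψ) hψ ψ
  rw [tser_expS_sone hψ]
  calc expOp (twistedAct (tser σ ψ) ψ) sone ⋆ expOp (dserLinear ψ) (monom [some σ])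
      = expOp (twistedAct (tser σ ψ) ψ) (monom [some σ]) := by
        rw [← expOp_smul2 hs (raisesWeight_dserLinear ψ) (twistedAct_smul2 _ ψ), sone_smul2]
    _ = expOp (twistedAct (tser σ ψ) ψ) (mulBilin (monom [some σ]) sone) := by
        rw [mulBilin_apply, smul2_sone]
    _ = monom [some σ] ⋆ expOp (twistedAct (tser σ ψ) ψ) sone :=
        ((raisesWeight_mulBilin (mem_weightGE_zero _)).map_expOp_of_semiconjBy hs
          (commute_mulBilin_letter_twistedAct σ ψ) sone).symm

theorem expOp_dserLinear_letter (hψ : ψ [] = 0) (a : Option Γ) :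
    expOp (dserLinear ψ) (monom [a]) = kletter (expS ψ sone) a := by
  cases a with
  | none =>
    refine expOp_of_apply_eq_zero ?_
    rw [dserLinear_monom, dword_singleton]
    rfl
  | some σ =>
    have hconst : tser σ (expS ψ sone) [] = 1 := by
      rw [tser_expS_sone hψ, expOp_apply_nil]
      rfl
    exact eq_sinv_smul2_of_smul2_eq hconst (tser_expS_smul2_expOp_letter hψ σ)

theorem expOp_dserLinear_monom (hψ : ψ [] = 0) (w : List (Option Γ)) :
    expOp (dserLinear ψ) (monom w) = wordProd (w.map (kletter (expS ψ sone))) := by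
  have hd := raisesWeight_dserLinear ψ
  induction w with
  | nil =>
    rw [monom_nil]
    exact expOp_of_apply_eq_zero (dserLinear_sone ψ)
  | cons a w ih =>
    rw [← List.singleton_append, ← monom_smul2_monom, expOp_smul2 hd hd (dserLinear_smul2 ψ), ih,
      expOp_dserLinear_letter hψ]
    rfl

theorem kappa_expS_sone (hψ : ψ [] = 0) (H : Ser (Option Γ) k) :
    kappa (expS ψ sone) H = expOp (dserLinear ψ) H := by
  rw [(raisesWeight_expOp (raisesWeight_dserLinear ψ)).eq_liftWords]
  funext u
  simp only [liftWords_apply, expOp_dserLinear_monom hψ, kappa]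

end IharaExponential

end Ser

/-- For ψ with zero constant term, `Exp(ψ) ⊛ H = exp(s_ψ)(H)`,
where `Exp(ψ) = exp(s_ψ)(1)` and `G ⊛ H = G · κ_G(H)`. -/
theorem Exp_mulMT {Γ k : Type} [CommGroup Γ] [Fintype Γ] [DecidableEq Γ]
    [CommRing k] [Algebra ℚ k] (ψ : Ser (Option Γ) k) (hψ : ψ [] = 0)
    (H : Ser (Option Γ) k) :
    mulMT (expS ψ sone) H = expS ψ H := by
  calc mulMT (expS ψ sone) H
      = smul2 (expS ψ sone) (Ser.expOp (Ser.dserLinear ψ) H) := by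
        rw [mulMT, Ser.kappa_expS_sone hψ]
    _ = expS ψ H := (Ser.expS_eq_smul2 hψ H).symm
end

section
/- Iterated integrals satisfy the shuffle relation: for convergent words u, v over X_Γ, I(u)·I(v) = I(u ⧢ v), where ⧢ is the shuffle product extended linearly and I is extended linearly to linear combinations of words. -/
/-- The differential forms: `ω₀ = dt/t` for the letter `x₀` (encoded `none`) and
`ω_σ = σ dt/(1 − σt)` for the letter `x_σ` (encoded `some σ`). -/
noncomputable def omegaForm : Option ℂ → ℝ → ℂ
  | none => fun t => 1 / (t : ℂ)
  | some σ => fun t => σ / (1 - σ * (t : ℂ))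

/-- The iterated integral `∫_{0 ≤ t_r ≤ ⋯ ≤ t₁ ≤ t} ⋀ ω_{ε_i}(t_i)` attached to a word,
defined recursively. -/
noncomputable def iterInt : List (Option ℂ) → ℝ → ℂ
  | [], _ => 1
  | e :: w, t => ∫ s in (0 : ℝ)..t, omegaForm e s * iterInt w s

/-!
Writing the product of two integrals over `[0, T]` as an integral over a square and cutting the
square along its diagonal expresses it through the primitives of the two integrands. For two
iterated integrals this is the recursion of the shuffle product on first letters, so the shuffle
relation holds at every `T` up to which all the words involved converge.

A word ending in `x₀` diverges at `0`. For any other nonempty word the outermost integrand is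
`O((1 - s)^(-3/2))` on `(0, 1)`, by induction: integrating such a bound gives
`O(s * (1 - s)^(-1/2))`, and the next form contributes at most a factor `1 / (s * (1 - s))`.
If the first letter is not `x₁`, that factor is at most a multiple of `1 / s`, and the integrand is
integrable up to `1`.
-/

open MeasureTheory Set

section IntegralMulIntegral

variable {𝕜 : Type*} [RCLike 𝕜] {f g : ℝ → 𝕜} {a b : ℝ}

theorem integral_mul_integral_right_eq_integral_integral_left_mul (hab : a ≤ b)
    (hf : IntervalIntegrable f volume a b) (hg : IntervalIntegrable g volume a b) :
    ∫ s in a..b, f s * ∫ r in s..b, g r = ∫ r in a..b, (∫ s in a..r, f s) * g r := by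
  rw [intervalIntegrable_iff_integrableOn_Ioc_of_le hab] at hf hg
  have hlt : MeasurableSet {p : ℝ × ℝ | p.1 < p.2} := measurableSet_lt measurable_fst measurable_snd
  have hslice_right {s : ℝ} (hs : s ∈ Ioc a b) :
      ∫ r in Ioc a b, (Ioi s).indicator (fun r => f s * g r) r = f s * ∫ r in s..b, g r := by
    rw [setIntegral_indicator measurableSet_Ioi, Ioc_inter_Ioi, max_eq_right hs.1.le,
      integral_const_mul, intervalIntegral.integral_of_le hs.2]
  have hslice_left {r : ℝ} (hr : r ∈ Ioc a b) :
      ∫ s in Ioc a b, (Iio r).indicator (fun s => f s * g r) s = (∫ s in a..r, f s) * g r := by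
    have hinter : Ioc a b ∩ Iio r = Ioo a r := by
      ext s
      simpa [and_assoc] using fun _ hsr => hsr.le.trans hr.2
    rw [setIntegral_indicator measurableSet_Iio, hinter, integral_mul_const,
      intervalIntegral.integral_of_le hr.1.le, integral_Ioc_eq_integral_Ioo]
  rw [intervalIntegral.integral_of_le hab, intervalIntegral.integral_of_le hab,
    ← setIntegral_congr_fun measurableSet_Ioc fun _ => hslice_right,
    ← setIntegral_congr_fun measurableSet_Ioc fun _ => hslice_left]
  exact integral_integral_swap ((hf.mul_prod hg).indicator hlt)

theorem integral_mul_integral_eq_add (hab : a ≤ b)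
    (hf : IntervalIntegrable f volume a b) (hg : IntervalIntegrable g volume a b) :
    (∫ s in a..b, f s) * ∫ s in a..b, g s =
      (∫ s in a..b, f s * ∫ r in a..s, g r) + ∫ s in a..b, (∫ r in a..s, f r) * g s := by
  rw [← integral_mul_integral_right_eq_integral_integral_left_mul hab hf hg,
    ← intervalIntegral.integral_mul_const, ← intervalIntegral.integral_add]
  · refine intervalIntegral.integral_congr fun s hs => ?_
    rw [← mul_add, intervalIntegral.integral_add_adjacent_intervals
      (hg.mono_set (uIcc_subset_uIcc_left hs)) (hg.mono_set (uIcc_subset_uIcc_right hs))]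
  · exact hf.mul_continuousOn (intervalIntegral.continuousOn_primitive_interval' hg left_mem_uIcc)
  · exact hf.mul_continuousOn (intervalIntegral.continuousOn_primitive_interval_left
      ((intervalIntegrable_iff' (by simp)).1 hg))

end IntegralMulIntegral

theorem stronglyMeasurable_intervalIntegral {E : Type*} [NormedAddCommGroup E] [NormedSpace ℝ E]
    {f : ℝ → E} (hf : StronglyMeasurable f) (a : ℝ) :
    StronglyMeasurable fun t => ∫ s in a..t, f s := by
  have hIoc {l u : ℝ → ℝ} (hl : Measurable l) (hu : Measurable u) :
      StronglyMeasurable fun t => ∫ s in Ioc (l t) (u t), f s := by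
    have hA : MeasurableSet {p : ℝ × ℝ | p.2 ∈ Ioc (l p.1) (u p.1)} :=
      (measurableSet_lt (hl.comp measurable_fst) measurable_snd).inter
        (measurableSet_le measurable_snd (hu.comp measurable_fst))
    simp_rw [← integral_indicator measurableSet_Ioc]
    exact ((hf.comp_measurable measurable_snd).indicator hA).integral_prod_right'
  exact (hIoc measurable_const measurable_id).sub (hIoc measurable_id measurable_const)

section OneSubRpow

variable {t : ℝ}

theorem intervalIntegrable_one_sub_rpow (r : ℝ) (ht : t < 1) :
    IntervalIntegrable (fun s : ℝ => (1 - s) ^ r) volume 0 t := by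
  refine ContinuousOn.intervalIntegrable fun s hs => ?_
  have hs₁ : s < 1 := hs.2.trans_lt (max_lt one_pos ht)
  have hs' : 1 - s ≠ 0 := by linarith
  fun_prop (disch := simp [hs'])

theorem intervalIntegrable_one_sub_rpow' {r : ℝ} (hr : -1 < r) :
    IntervalIntegrable (fun s : ℝ => (1 - s) ^ r) volume 0 1 := by
  simpa using
    ((intervalIntegral.intervalIntegrable_rpow' (a := 1) (b := 0) hr).comp_sub_left 1)

theorem integral_one_sub_rpow_le {r : ℝ} (hr₀ : 0 < r) (hr₁ : r ≤ 1) (ht₀ : 0 ≤ t) (ht : t < 1) :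
    ∫ s in (0 : ℝ)..t, (1 - s) ^ (-r - 1) ≤ t * (1 - t) ^ (-r) / r := by
  have ht' : 0 < 1 - t := by linarith
  have hne : (0 : ℝ) ∉ uIcc (1 - t) 1 := by
    rw [uIcc_of_le (by linarith)]
    exact fun h => ht'.not_ge h.1
  have hpow : 1 - t ≤ (1 - t) ^ r := by
    simpa using Real.rpow_le_rpow_of_exponent_ge ht' (by linarith) hr₁
  have hinv : (1 - t) ^ r * (1 - t) ^ (-r) = 1 := by
    rw [← Real.rpow_add ht', add_neg_cancel, Real.rpow_zero]
  have hnonneg : 0 ≤ (1 - t) ^ (-r) := by positivity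
  calc ∫ s in (0 : ℝ)..t, (1 - s) ^ (-r - 1)
      = ((1 - t) ^ (-r) - 1) / r := by
        rw [intervalIntegral.integral_comp_sub_left (fun x : ℝ => x ^ (-r - 1)), sub_zero,
          integral_rpow (.inr ⟨by linarith, hne⟩), sub_add_cancel, Real.one_rpow, div_neg,
          ← neg_div, neg_sub]
    _ ≤ t * (1 - t) ^ (-r) / r := by
        gcongr
        nlinarith

theorem norm_integral_le_of_norm_le_one_sub_rpow {E : Type*} [NormedAddCommGroup E]
    [NormedSpace ℝ E] {f : ℝ → E} {C r : ℝ} (hr₀ : 0 < r) (hr₁ : r ≤ 1)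
    (hf : ∀ s ∈ Ioo (0 : ℝ) 1, ‖f s‖ ≤ C * (1 - s) ^ (-r - 1)) (ht : t ∈ Ico (0 : ℝ) 1) :
    ‖∫ s in (0 : ℝ)..t, f s‖ ≤ C / r * t * (1 - t) ^ (-r) := by
  have hC : 0 ≤ C := by
    have hhalf := (norm_nonneg _).trans (hf (1 / 2) (by norm_num))
    exact nonneg_of_mul_nonneg_left hhalf (by positivity)
  calc ‖∫ s in (0 : ℝ)..t, f s‖
      ≤ ∫ s in (0 : ℝ)..t, C * (1 - s) ^ (-r - 1) :=
        intervalIntegral.norm_integral_le_of_norm_le ht.1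
          (ae_of_all _ fun s hs => hf s ⟨hs.1, hs.2.trans_lt ht.2⟩)
          ((intervalIntegrable_one_sub_rpow _ ht.2).const_mul C)
    _ ≤ C * (t * (1 - t) ^ (-r) / r) := by
        rw [intervalIntegral.integral_const_mul]
        gcongr
        exact integral_one_sub_rpow_le hr₀ hr₁ ht.1 ht.2
    _ = C / r * t * (1 - t) ^ (-r) := by ring

theorem one_le_one_sub_rpow {r : ℝ} (hr : r ≤ 0) (ht : t ∈ Ico (0 : ℝ) 1) : 1 ≤ (1 - t) ^ r :=
  Real.one_le_rpow_of_pos_of_le_one_of_nonpos (by linarith [ht.2]) (by linarith [ht.1]) hr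

end OneSubRpow

section Shuffles

variable {X : Type*} {u v w : List X}

/-- The shuffle product of two words, as the list of its terms with multiplicity. -/
def shuffles : List X → List X → List (List X)
  | [], v => [v]
  | a :: u, [] => [a :: u]
  | a :: u, b :: v =>
      (shuffles u (b :: v)).map (List.cons a) ++ (shuffles (a :: u) v).map (List.cons b)

theorem perm_append_of_mem_shuffles (hw : w ∈ shuffles u v) : w.Perm (u ++ v) := by
  induction u, v using shuffles.induct generalizing w with
  | case1 v => simp_all [shuffles]
  | case2 a u => simp_all [shuffles]
  | case3 a u b v ihu ihv =>
    simp only [shuffles, List.mem_append, List.mem_map] at hw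
    rcases hw with ⟨w, hw, rfl⟩ | ⟨w, hw, rfl⟩
    · exact (ihu hw).cons a
    · exact ((ihv hw).cons b).trans List.perm_middle.symm

theorem head?_eq_or_of_mem_shuffles (hw : w ∈ shuffles u v) :
    w.head? = u.head? ∨ w.head? = v.head? := by
  cases u <;> cases v <;> simp only [shuffles, List.mem_append, List.mem_map,
    List.mem_singleton] at hw <;> aesop

theorem getLast?_eq_or_of_mem_shuffles (hw : w ∈ shuffles u v) :
    w.getLast? = u.getLast? ∨ w.getLast? = v.getLast? := by
  induction u, v using shuffles.induct generalizing w with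
  | case1 v => simp_all [shuffles]
  | case2 a u => simp_all [shuffles]
  | case3 a u b v ihu ihv =>
    simp only [shuffles, List.mem_append, List.mem_map] at hw
    rcases hw with ⟨w, hw, rfl⟩ | ⟨w, hw, rfl⟩
    · rcases ihu hw with h | h <;> simp [List.getLast?_cons, h]
    · rcases ihv hw with h | h <;> simp [List.getLast?_cons, h]

end Shuffles

section ShuffleCoefficients

variable {X : Type} [DecidableEq X]

theorem count_map_cons [BEq (List X)] [LawfulBEq (List X)]
    (a c : X) (w : List X) (L : List (List X)) :
    (L.map (List.cons a)).count (c :: w) = if a = c then L.count w else 0 := by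
  split_ifs with h
  · rw [h, List.count_map_of_injective _ _ List.cons_injective]
  · simp [List.count_eq_zero, h]

theorem shc_nil_left (v w : List X) : shc [] v w = if v = w then 1 else 0 := by
  induction w generalizing v with
  | nil => simp [shc]
  | cons c w ih => cases v <;> simp [shc, ih, ite_and]

theorem shc_nil_right (u w : List X) : shc u [] w = if u = w then 1 else 0 := by
  induction w generalizing u with
  | nil => simp [shc]
  | cons c w ih => cases u <;> simp [shc, ih, ite_and]

theorem count_shuffles [BEq (List X)] [LawfulBEq (List X)] (u v w : List X) :
    (shuffles u v).count w = shc u v w := by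
  induction u, v using shuffles.induct generalizing w with
  | case1 v => simp [shuffles, shc_nil_left, List.count_singleton]
  | case2 a u => simp [shuffles, shc_nil_right, List.count_singleton]
  | case3 a u b v ihu ihv =>
    rw [shuffles, List.count_append]
    cases w with
    | nil => simp [shc, List.count_eq_zero]
    | cons c w => rw [count_map_cons, count_map_cons, ihu, ihv, shc]

theorem sum_map_shuffles {M : Type*} [AddCommMonoid M] (u v : List X) (f : List X → M) :
    ((shuffles u v).map f).sum = ∑ w ∈ (u ++ v).permutations.toFinset, shc u v w • f w := by
  simp_rw [Finset.sum_list_map_count, count_shuffles]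
  refine Finset.sum_subset (fun w hw => ?_) fun w _ hw => ?_
  · simpa using perm_append_of_mem_shuffles (List.mem_toFinset.1 hw)
  · rw [← count_shuffles, List.count_eq_zero.2 (mt List.mem_toFinset.2 hw), zero_nsmul]

end ShuffleCoefficients

/-- Convergence of the iterated integral of a word up to `T`: every integral in the recursive
definition of `iterInt w T` converges absolutely. The inner ones are only evaluated at `s < T`, and
they may diverge at `T` itself. -/
def IterIntegrable : List (Option ℂ) → ℝ → Prop
  | [], _ => True
  | e :: w, T => IntervalIntegrable (fun s => omegaForm e s * iterInt w s) volume 0 T ∧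
      ∀ s ∈ Ioo 0 T, IterIntegrable w s

theorem IterIntegrable.mono {w : List (Option ℂ)} {s T : ℝ} (h : IterIntegrable w T) (hs : 0 ≤ s)
    (hsT : s ≤ T) : IterIntegrable w s := by
  cases w with
  | nil => trivial
  | cons e w =>
    refine ⟨h.1.mono_set ?_, fun r hr => h.2 r ⟨hr.1, hr.2.trans_le hsT⟩⟩
    rw [uIcc_of_le hs, uIcc_of_le (hs.trans hsT)]
    exact Icc_subset_Icc_right hsT

theorem integral_omegaForm_mul_sum_iterInt {e : Option ℂ} {T : ℝ} {L : List (List (Option ℂ))}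
    (hL : ∀ w ∈ L, IntervalIntegrable (fun s => omegaForm e s * iterInt w s) volume 0 T) :
    ∫ s in (0 : ℝ)..T, omegaForm e s * (L.map (iterInt · s)).sum =
      ((L.map (List.cons e)).map (iterInt · T)).sum := by
  simp_rw [← List.sum_map_mul_left, List.map_map, ← Fin.sum_univ_fun_getElem]
  exact intervalIntegral.integral_finsetSum fun i _ => hL _ (List.getElem_mem i.isLt)

theorem iterInt_mul_iterInt {u v : List (Option ℂ)} {T : ℝ} (hT : 0 ≤ T)
    (hu : IterIntegrable u T) (hv : IterIntegrable v T)
    (huv : ∀ w ∈ shuffles u v, IterIntegrable w T) :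
    iterInt u T * iterInt v T = ((shuffles u v).map (iterInt · T)).sum := by
  induction u, v using shuffles.induct generalizing T with
  | case1 v => simp [shuffles, iterInt]
  | case2 a u => simp [shuffles, iterInt]
  | case3 a u b v ihu ihv =>
    simp only [shuffles, List.forall_mem_append, List.forall_mem_map] at huv
    obtain ⟨huv_left, huv_right⟩ := huv
    have hleft : ∫ s in (0 : ℝ)..T, omegaForm a s * iterInt u s * iterInt (b :: v) s =
        (((shuffles u (b :: v)).map (List.cons a)).map (iterInt · T)).sum := by
      rw [← integral_omegaForm_mul_sum_iterInt fun w hw => (huv_left w hw).1]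
      refine intervalIntegral.integral_congr_Ioo_of_le hT fun s hs => ?_
      rw [mul_assoc, ihu hs.1.le (hu.2 s hs) (hv.mono hs.1.le hs.2.le)
        fun w hw => (huv_left w hw).2 s hs]
    have hright : ∫ s in (0 : ℝ)..T, iterInt (a :: u) s * (omegaForm b s * iterInt v s) =
        (((shuffles (a :: u) v).map (List.cons b)).map (iterInt · T)).sum := by
      rw [← integral_omegaForm_mul_sum_iterInt fun w hw => (huv_right w hw).1]
      refine intervalIntegral.integral_congr_Ioo_of_le hT fun s hs => ?_
      rw [mul_left_comm, ihv hs.1.le (hu.mono hs.1.le hs.2.le) (hv.2 s hs)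
        fun w hw => (huv_right w hw).2 s hs]
    rw [shuffles, List.map_append, List.sum_append, ← hleft, ← hright]
    exact integral_mul_integral_eq_add hT hu.1 hv.1

section OmegaForm

theorem measurable_omegaForm (e : Option ℂ) : Measurable (omegaForm e) := by
  cases e <;> unfold omegaForm <;> fun_prop

theorem stronglyMeasurable_iterInt (w : List (Option ℂ)) : StronglyMeasurable (iterInt w) := by
  induction w with
  | nil => exact stronglyMeasurable_const
  | cons e w ih =>
    exact stronglyMeasurable_intervalIntegral ((measurable_omegaForm e).stronglyMeasurable.mul ih) 0

variable {σ : ℂ}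

theorem exists_norm_omegaForm_some_le (hσ : ∀ t ∈ Ico (0 : ℝ) 1, σ * t ≠ 1) (hσ₁ : σ ≠ 1) :
    ∃ K, ∀ s ∈ Icc (0 : ℝ) 1, ‖omegaForm (some σ) s‖ ≤ K := by
  refine isCompact_Icc.exists_bound_of_continuousOn ?_
  refine ContinuousOn.div (by fun_prop) (by fun_prop) fun s hs => sub_ne_zero.2 (Ne.symm ?_)
  rcases hs.2.lt_or_eq with hs₁ | rfl
  · exact hσ s ⟨hs.1, hs₁⟩
  · simpa using hσ₁

theorem exists_norm_omegaForm_some_le_div_one_sub (hσ : ∀ t ∈ Ico (0 : ℝ) 1, σ * t ≠ 1) :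
    ∃ K, ∀ s ∈ Ioo (0 : ℝ) 1, ‖omegaForm (some σ) s‖ ≤ K / (1 - s) := by
  by_cases hσ₁ : σ = 1
  · refine ⟨1, fun s hs => ?_⟩
    have hnorm : ‖(1 : ℂ) - s‖ = 1 - s := by
      rw [← Complex.ofReal_one, ← Complex.ofReal_sub, Complex.norm_of_nonneg (sub_nonneg.2 hs.2.le)]
    simp [omegaForm, hσ₁, hnorm]
  · obtain ⟨K, hK⟩ := exists_norm_omegaForm_some_le hσ hσ₁
    refine ⟨K, fun s hs => ?_⟩
    have hs' : 0 < 1 - s := sub_pos.2 hs.2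
    have hKs := hK s (Ioo_subset_Icc_self hs)
    rw [le_div_iff₀ hs']
    nlinarith [norm_nonneg (omegaForm (some σ) s), hs.1]

variable {e : Option ℂ}

theorem exists_norm_omegaForm_le_div (he : ∀ σ, e = some σ → ∀ t ∈ Ico (0 : ℝ) 1, σ * t ≠ 1)
    (he₁ : e ≠ some 1) : ∃ K, ∀ s ∈ Ioo (0 : ℝ) 1, ‖omegaForm e s‖ ≤ K / s := by
  cases e with
  | none =>
    refine ⟨1, fun s hs => ?_⟩
    simp [omegaForm, abs_of_pos hs.1]
  | some σ =>
    obtain ⟨K, hK⟩ := exists_norm_omegaForm_some_le (he σ rfl) (by simpa using he₁)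
    refine ⟨K, fun s hs => ?_⟩
    have hKs := hK s (Ioo_subset_Icc_self hs)
    rw [le_div_iff₀ hs.1]
    nlinarith [norm_nonneg (omegaForm (some σ) s), hs.2]

theorem exists_norm_omegaForm_le_div_mul_one_sub
    (he : ∀ σ, e = some σ → ∀ t ∈ Ico (0 : ℝ) 1, σ * t ≠ 1) :
    ∃ K, ∀ s ∈ Ioo (0 : ℝ) 1, ‖omegaForm e s‖ ≤ K / (s * (1 - s)) := by
  cases e with
  | none =>
    obtain ⟨K, hK⟩ := exists_norm_omegaForm_le_div he (by simp)
    refine ⟨K, fun s hs => ?_⟩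
    have hKs := (le_div_iff₀ hs.1).1 (hK s hs)
    rw [le_div_iff₀ (mul_pos hs.1 (sub_pos.2 hs.2)), ← mul_assoc]
    exact (mul_le_of_le_one_right (mul_nonneg (norm_nonneg _) hs.1.le)
      (by linarith [hs.1])).trans hKs
  | some σ =>
    obtain ⟨K, hK⟩ := exists_norm_omegaForm_some_le_div_one_sub (he σ rfl)
    refine ⟨K, fun s hs => ?_⟩
    have hs' : 0 < 1 - s := sub_pos.2 hs.2
    have hKs := (le_div_iff₀ hs').1 (hK s hs)
    rw [le_div_iff₀ (mul_pos hs.1 hs'), mul_left_comm]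
    exact (mul_le_of_le_one_left (by positivity) hs.2.le).trans hKs

end OmegaForm

/-- The conditions on a word that make `iterInt w t` converge for all `t < 1`: none of its forms
`ω_σ` has a pole in `[0, 1)`, and the innermost form is not `dt/t`, which has a pole at `0`.
At `t = 1` the first letter must also differ from `x₁`. -/
structure IsAdmissible (w : List (Option ℂ)) : Prop where
  mul_ne_one : ∀ σ, some σ ∈ w → ∀ t ∈ Ico (0 : ℝ) 1, σ * t ≠ 1
  getLast?_ne : w.getLast? ≠ some none

namespace IsAdmissible

variable {e : Option ℂ} {u v w : List (Option ℂ)}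

theorem tail (h : IsAdmissible (e :: w)) : IsAdmissible w where
  mul_ne_one σ hσ := h.mul_ne_one σ (List.mem_cons_of_mem e hσ)
  getLast?_ne hw := h.getLast?_ne (by simp [List.getLast?_cons, hw])

theorem head_mul_ne_one (h : IsAdmissible (e :: w)) :
    ∀ σ, e = some σ → ∀ t ∈ Ico (0 : ℝ) 1, σ * t ≠ 1 := by
  rintro σ rfl
  exact h.mul_ne_one σ List.mem_cons_self

theorem exists_eq_some (h : IsAdmissible [e]) : ∃ σ, e = some σ :=
  Option.ne_none_iff_exists'.1 fun he => h.getLast?_ne (by simp [he])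

theorem of_mem_shuffles (hu : IsAdmissible u) (hv : IsAdmissible v) (hw : w ∈ shuffles u v) :
    IsAdmissible w where
  mul_ne_one σ hσ := by
    rcases List.mem_append.1 ((perm_append_of_mem_shuffles hw).mem_iff.1 hσ) with h | h
    · exact hu.mul_ne_one σ h
    · exact hv.mul_ne_one σ h
  getLast?_ne := by
    rcases getLast?_eq_or_of_mem_shuffles hw with h | h
    · exact h ▸ hu.getLast?_ne
    · exact h ▸ hv.getLast?_ne

-- Each letter `x₁` contributes at most a factor `log (1 / (1 - s))` to the inner integral; the
-- exponent `-1/2` absorbs all of these, so the same rate works for words of every length.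
theorem exists_norm_integrand_le (h : IsAdmissible (e :: w)) :
    ∃ C, ∀ s ∈ Ioo (0 : ℝ) 1,
      ‖omegaForm e s * iterInt w s‖ ≤ C * (1 - s) ^ (-(1 / 2) - 1 : ℝ) := by
  induction w generalizing e with
  | nil =>
    obtain ⟨σ, rfl⟩ := h.exists_eq_some
    obtain ⟨K, hK⟩ := exists_norm_omegaForm_some_le_div_one_sub (h.head_mul_ne_one σ rfl)
    refine ⟨K, fun s hs => ?_⟩
    have hs' : 0 < 1 - s := sub_pos.2 hs.2
    calc ‖omegaForm (some σ) s * iterInt [] s‖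
        ≤ ‖omegaForm (some σ) s‖ * (1 - s) ^ (-(1 / 2) : ℝ) := by
          rw [iterInt, mul_one]
          exact le_mul_of_one_le_right (norm_nonneg _)
            (one_le_one_sub_rpow (by norm_num) (Ioo_subset_Ico_self hs))
      _ ≤ K / (1 - s) * (1 - s) ^ (-(1 / 2) : ℝ) := by
          gcongr
          exact hK s hs
      _ = K * (1 - s) ^ (-(1 / 2) - 1 : ℝ) := by
          rw [Real.rpow_sub_one hs'.ne']
          ring
  | cons e' w ih =>
    obtain ⟨C, hC⟩ := ih h.tail
    obtain ⟨K, hK⟩ := exists_norm_omegaForm_le_div_mul_one_sub h.head_mul_ne_one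
    refine ⟨K * (C / (1 / 2)), fun s hs => ?_⟩
    have hs' : 0 < 1 - s := sub_pos.2 hs.2
    calc ‖omegaForm e s * iterInt (e' :: w) s‖
        ≤ K / (s * (1 - s)) * (C / (1 / 2) * s * (1 - s) ^ (-(1 / 2) : ℝ)) :=
          norm_mul_le_of_le (hK s hs) (norm_integral_le_of_norm_le_one_sub_rpow (by norm_num)
            (by norm_num) hC (Ioo_subset_Ico_self hs))
      _ = K * (C / (1 / 2)) * (1 - s) ^ (-(1 / 2) - 1 : ℝ) := by
          have hs₀ : s ≠ 0 := hs.1.ne'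
          rw [Real.rpow_sub_one hs'.ne']
          field_simp

theorem exists_norm_integrand_le_of_ne (h : IsAdmissible (e :: w)) (he : e ≠ some 1) :
    ∃ C, ∀ s ∈ Ioo (0 : ℝ) 1, ‖omegaForm e s * iterInt w s‖ ≤ C * (1 - s) ^ (-(1 / 2) : ℝ) := by
  cases w with
  | nil =>
    obtain ⟨σ, rfl⟩ := h.exists_eq_some
    obtain ⟨K, hK⟩ := exists_norm_omegaForm_some_le (h.head_mul_ne_one σ rfl) (by simpa using he)
    refine ⟨K, fun s hs => ?_⟩
    have hs' : 0 < 1 - s := sub_pos.2 hs.2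
    calc ‖omegaForm (some σ) s * iterInt [] s‖
        ≤ ‖omegaForm (some σ) s‖ * (1 - s) ^ (-(1 / 2) : ℝ) := by
          rw [iterInt, mul_one]
          exact le_mul_of_one_le_right (norm_nonneg _)
            (one_le_one_sub_rpow (by norm_num) (Ioo_subset_Ico_self hs))
      _ ≤ K * (1 - s) ^ (-(1 / 2) : ℝ) := by
          gcongr
          exact hK s (Ioo_subset_Icc_self hs)
  | cons e' w =>
    obtain ⟨C, hC⟩ := h.tail.exists_norm_integrand_le
    obtain ⟨K, hK⟩ := exists_norm_omegaForm_le_div h.head_mul_ne_one he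
    refine ⟨K * (C / (1 / 2)), fun s hs => ?_⟩
    calc ‖omegaForm e s * iterInt (e' :: w) s‖
        ≤ K / s * (C / (1 / 2) * s * (1 - s) ^ (-(1 / 2) : ℝ)) :=
          norm_mul_le_of_le (hK s hs) (norm_integral_le_of_norm_le_one_sub_rpow (by norm_num)
            (by norm_num) hC (Ioo_subset_Ico_self hs))
      _ = K * (C / (1 / 2)) * (1 - s) ^ (-(1 / 2) : ℝ) := by
          have hs₀ : s ≠ 0 := hs.1.ne'
          field_simp

end IsAdmissible

theorem intervalIntegrable_omegaForm_mul_iterInt {e : Option ℂ} {w : List (Option ℂ)} {φ : ℝ → ℝ}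
    {T : ℝ} (hT : 0 ≤ T) (hφ : IntervalIntegrable φ volume 0 T)
    (hle : ∀ s ∈ Ioo 0 T, ‖omegaForm e s * iterInt w s‖ ≤ φ s) :
    IntervalIntegrable (fun s => omegaForm e s * iterInt w s) volume 0 T := by
  rw [intervalIntegrable_iff_integrableOn_Ioo_of_le hT] at hφ ⊢
  have hmeas := (measurable_omegaForm e).stronglyMeasurable.mul (stronglyMeasurable_iterInt w)
  exact Integrable.mono' hφ hmeas.aestronglyMeasurable
    ((ae_restrict_iff' measurableSet_Ioo).2 (ae_of_all _ hle))

theorem IsAdmissible.iterIntegrable_of_lt_one {w : List (Option ℂ)} (h : IsAdmissible w) {T : ℝ}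
    (hT₀ : 0 ≤ T) (hT : T < 1) : IterIntegrable w T := by
  induction w generalizing T with
  | nil => trivial
  | cons e w ih =>
    obtain ⟨C, hC⟩ := h.exists_norm_integrand_le
    exact ⟨intervalIntegrable_omegaForm_mul_iterInt hT₀
      ((intervalIntegrable_one_sub_rpow _ hT).const_mul C)
      fun s hs => hC s (Ioo_subset_Ioo_right hT.le hs),
      fun s hs => ih h.tail hs.1.le (hs.2.trans hT)⟩

theorem IsAdmissible.iterIntegrable_one {w : List (Option ℂ)} (h : IsAdmissible w)
    (hw : w.head? ≠ some (some 1)) : IterIntegrable w 1 := by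
  cases w with
  | nil => trivial
  | cons e w =>
    obtain ⟨C, hC⟩ := h.exists_norm_integrand_le_of_ne (by simpa using hw)
    exact ⟨intervalIntegrable_omegaForm_mul_iterInt zero_le_one
      ((intervalIntegrable_one_sub_rpow' (by norm_num)).const_mul C) hC,
      fun s hs => h.tail.iterIntegrable_of_lt_one hs.1.le hs.2⟩

theorem mul_ofReal_ne_one_of_norm_le_one {σ : ℂ} (hσ : ‖σ‖ ≤ 1) {t : ℝ} (ht : t ∈ Ico (0 : ℝ) 1) :
    σ * t ≠ 1 := by
  intro h
  have hnorm := congrArg norm h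
  rw [norm_mul, Complex.norm_of_nonneg ht.1, norm_one] at hnorm
  nlinarith [ht.1, ht.2]

open Classical in
theorem iterInt_shuffle_general (u v : List (Option ℂ))
    (hpoles : ∀ σ : ℂ, some σ ∈ u ++ v → ∀ t ∈ Ico (0 : ℝ) 1, σ * t ≠ 1)
    (hu₁ : u.head? ≠ some (some 1)) (hu₀ : u.getLast? ≠ some none)
    (hv₁ : v.head? ≠ some (some 1)) (hv₀ : v.getLast? ≠ some none) :
    iterInt u 1 * iterInt v 1 =
      ∑ w ∈ (u ++ v).permutations.toFinset, (shc u v w : ℂ) * iterInt w 1 := by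
  have hu : IsAdmissible u := ⟨fun σ hσ => hpoles σ (List.mem_append_left v hσ), hu₀⟩
  have hv : IsAdmissible v := ⟨fun σ hσ => hpoles σ (List.mem_append_right u hσ), hv₀⟩
  have huv : ∀ w ∈ shuffles u v, IterIntegrable w 1 := fun w hw =>
    (hu.of_mem_shuffles hv hw).iterIntegrable_one <| by
      rcases head?_eq_or_of_mem_shuffles hw with h | h <;> rwa [h]
  rw [iterInt_mul_iterInt zero_le_one (hu.iterIntegrable_one hu₁) (hv.iterIntegrable_one hv₁) huv,
    sum_map_shuffles]
  simp only [nsmul_eq_mul]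

open Classical in
/-- Iterated integrals satisfy the shuffle relation: for convergent
words `u`, `v` over `X_Γ` (not beginning with `x₁` nor ending with `x₀`, letters being
roots of unity), `I(u)·I(v) = I(u ⧢ v)`. -/
theorem iterInt_shuffle (u v : List (Option ℂ))
    (hroots : ∀ z : ℂ, some z ∈ u ++ v → ∃ m : ℕ, 0 < m ∧ z ^ m = 1)
    (hu₁ : u.head? ≠ some (some 1)) (hu₀ : u.getLast? ≠ some none)
    (hv₁ : v.head? ≠ some (some 1)) (hv₀ : v.getLast? ≠ some none) :
    iterInt u 1 * iterInt v 1 =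
      ∑ w ∈ (u ++ v).permutations.toFinset, (shc u v w : ℂ) * iterInt w 1 := by
  refine iterInt_shuffle_general u v (fun σ hσ t ht => ?_) hu₁ hu₀ hv₁ hv₀
  obtain ⟨m, hm, hσm⟩ := hroots σ hσ
  exact mul_ofReal_ne_one_of_norm_le_one (Complex.norm_eq_one_of_pow_eq_one hσm hm.ne').le ht
end
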